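/- arXiv:1906.04882 — 2 statements merged into one kernel-verified Lean document; each statement's English description precedes it below -/
import Mathlib

section
/- Let ψ (in V) and ψ' (in V') be isomorphic linear representations of a poset P over a field k. Suppose V = U₁ ⊕ … ⊕ Uₙ is a decomposition of ψ into indecomposable subrepresentations, i.e. ψ(p) = ⊕ᵢ (ψ(p) ∩ Uᵢ) for all p ∈ P and each restricted representation p ↦ ψ(p) ∩ Uᵢ on Uᵢ is indecomposable; similarly suppose V' = U'₁ ⊕ … ⊕ U'ₙ' is a decomposition of ψ' into indecomposable subrepresentations. Then n = n' and there is a permutation σ of {1,…,n} such that for every i the restriction of ψ to Uᵢ is isomorphic to the restriction of ψ' to U'_{σ(i)}. -/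
/-- The restriction of a poset representation `ψ` in `V` to a subspace `U`:
the representation `p ↦ ψ(p) ∩ U` viewed inside `U`. -/
def restrictRep {k V P : Type*} [Field k] [AddCommGroup V] [Module k V]
    (ψ : P → Submodule k V) (U : Submodule k V) : P → Submodule k ↥U :=
  fun p => (ψ p).comap U.subtype

/-- Isomorphism of poset representations: a linear isomorphism of the ambient spaces
carrying each subspace onto the corresponding one. -/
def RepIso {k W W' P : Type*} [Field k] [AddCommGroup W] [Module k W]
    [AddCommGroup W'] [Module k W']
    (χ : P → Submodule k W) (χ' : P → Submodule k W') : Prop :=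
  ∃ g : W ≃ₗ[k] W', ∀ p, (χ p).map (g : W →ₗ[k] W') = χ' p

/-- Indecomposability of a poset representation: the ambient space is nonzero and every
direct sum decomposition compatible with all the subspaces is trivial. -/
def IsIndecompRep {k W P : Type*} [Field k] [AddCommGroup W] [Module k W]
    (χ : P → Submodule k W) : Prop :=
  Nontrivial W ∧ ∀ W' W'' : Submodule k W, IsCompl W' W'' →
    (∀ p, χ p = (χ p ⊓ W') ⊔ (χ p ⊓ W'')) → W' = ⊥ ∨ W'' = ⊥

/-!
The projections onto the summands of a decomposition of `ψ` form a complete family of orthogonal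
idempotents in the endomorphism ring of `ψ`. The corner ring cut out by such a projection is the
endomorphism ring of the summand, and it is local when the summand is indecomposable: the Fitting
decomposition of an endomorphism is compatible with all the subspaces, so every endomorphism is
nilpotent or invertible. Two complete families `e`, `f` of orthogonal local idempotents in a ring
are matched by cancellation: if `∑ i, e i` and `∑ j, f j` are equivalent, locality provides an `f j`
equivalent to a given `e i`, and a Schur complement shows that what remains after removing this pair
is still equivalent.
-/

section Idempotents

variable {R ι κ : Type*} [Ring R]

/-- Murray–von Neumann equivalence of idempotents: the right modules `eR` and `fR` are isomorphic,
by mutually inverse multiplications by `b` and `a`. The equation `a * b * a = a` makes `e` and `f`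
idempotent. -/
def IdempotentEquiv (e f : R) : Prop :=
  ∃ a b, a * b * a = a ∧ a * b = e ∧ b * a = f

/-- A local idempotent: one whose corner ring `eRe` is local. -/
structure IsLocalIdempotent (e : R) : Prop where
  idem : IsIdempotentElem e
  isLocalRing : IsLocalRing idem.Corner

namespace IsLocalIdempotent

variable {e : R}

theorem ne_zero (he : IsLocalIdempotent e) : e ≠ 0 := fun h =>
  have := he.isLocalRing
  one_ne_zero (α := he.idem.Corner) (Subtype.ext (show e = 0 from h))

theorem eq_zero_or_eq (he : IsLocalIdempotent e) {y : R} (hy : IsIdempotentElem y)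
    (hey : e * y = y) (hye : y * e = y) : y = 0 ∨ y = e := by
  have := he.isLocalRing
  let z : he.idem.Corner := ⟨y, (Subsemigroup.mem_corner_iff he.idem).2 ⟨hey, hye⟩⟩
  have hz : IsIdempotentElem z := Subtype.ext hy
  rcases IsLocalRing.isUnit_or_isUnit_of_add_one (add_sub_cancel z 1) with h | h
  · exact .inr (congrArg Subtype.val ((IsIdempotentElem.iff_eq_one_of_isUnit h).1 hz))
  · have hz1 : 1 - z = 1 := (IsIdempotentElem.iff_eq_one_of_isUnit h).1 hz.one_sub
    exact .inl (congrArg Subtype.val ((sub_eq_self (G := he.idem.Corner)).1 hz1))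

theorem exists_inverse_of_sum_eq (he : IsLocalIdempotent e) {s : Finset κ} {c : κ → R}
    (hc : ∑ j ∈ s, e * c j * e = e) :
    ∃ j ∈ s, ∃ x, e * x = x ∧ x * e = x ∧ x * c j * e = e ∧ e * c j * x = e := by
  have := he.isLocalRing
  let d (j : κ) : he.idem.Corner := ⟨e * c j * e, c j, rfl⟩
  have hd : ∑ j ∈ s, d j = 1 :=
    Subtype.ext <| (map_sum (NonUnitalSubringClass.subtype (NonUnitalRing.corner e)) d s).trans hc
  obtain ⟨j, hj, u, hu⟩ := IsLocalRing.exists_of_isUnit_sum (hd ▸ isUnit_one)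
  let x : he.idem.Corner := ↑u⁻¹
  obtain ⟨hex, hxe⟩ := (Subsemigroup.mem_corner_iff he.idem).1 x.2
  have hxd : x.1 * (e * c j * e) = e := congrArg Subtype.val (show x * d j = 1 by simp [x, ← hu])
  have hdx : e * c j * e * x.1 = e := congrArg Subtype.val (show d j * x = 1 by simp [x, ← hu])
  refine ⟨j, hj, x.1, hex, hxe, ?_, ?_⟩
  · rwa [← mul_assoc, ← mul_assoc, hxe] at hxd
  · rwa [mul_assoc, hex] at hdx

-- The products `e * a * f j * b * e` sum to `e`, so one of them is invertible in the local ring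
-- `eRe`; this makes the block `e * a * f j` of `a` invertible on one side, hence on both, since
-- `f j` has no proper nonzero subidempotents.
theorem exists_invertible_block (he : IsLocalIdempotent e) {f : κ → R}
    (hf : ∀ j, IsLocalIdempotent (f j)) {t : Finset κ} {a b : R} (hea : e * (a * b) = e)
    (hba : b * a = ∑ j ∈ t, f j) :
    ∃ j ∈ t, ∃ γ, f j * γ = γ ∧ γ * e = γ ∧ e * a * γ = e ∧ γ * a * f j = f j := by
  have hsum : ∑ j ∈ t, e * (a * f j * b) * e = e :=
    calc ∑ j ∈ t, e * (a * f j * b) * e = e * (a * b) * (a * b) * e := by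
          simp only [← Finset.sum_mul, ← Finset.mul_sum, ← hba, mul_assoc]
      _ = e := by rw [hea, hea, he.idem.eq]
  obtain ⟨j, hj, x, hex, hxe, hxc, hcx⟩ := he.exists_inverse_of_sum_eq hsum
  have hfj : f j * f j = f j := (hf j).idem
  set γ := f j * b * x with hγ
  have hfγ : f j * γ = γ := by simp only [hγ, ← mul_assoc, hfj]
  have heaγ : e * a * γ = e := by simpa only [hγ, mul_assoc] using hcx
  have hγaγ : γ * a * γ = γ :=
    calc γ * a * γ = f j * b * (x * (a * f j * b) * (e * x)) := by simp only [hγ, hex, mul_assoc]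
      _ = γ := by rw [← mul_assoc (x * _), hxc, hex]
  have hidem : IsIdempotentElem (γ * a * f j) :=
    calc γ * a * f j * (γ * a * f j) = γ * a * (f j * γ) * a * f j := by simp only [mul_assoc]
      _ = γ * a * f j := by rw [hfγ, hγaγ]
  refine ⟨j, hj, γ, hfγ, by rw [hγ, mul_assoc, hxe], heaγ, ?_⟩
  refine ((hf j).eq_zero_or_eq hidem (by rw [← mul_assoc, ← mul_assoc, hfγ])
    (by rw [mul_assoc, hfj])).resolve_left fun h => he.ne_zero ?_
  have hγ0 : γ = 0 := by
    rw [← hγaγ, mul_assoc, ← hfγ, ← mul_assoc, ← mul_assoc, hfγ, h, zero_mul]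
  rw [← heaγ, hγ0, mul_zero]

end IsLocalIdempotent

namespace IdempotentEquiv

-- `a - a * γ * a` is the Schur complement of the invertible block `p * a * q` of `a`, and its
-- inverse is the complementary block of `b`.
theorem sub_of_invertible_block {a b γ p q : R} (haba : a * b * a = a)
    (hp : a * b * p = p) (hp' : p * (a * b) = p) (hq : b * a * q = q) (hq' : q * (b * a) = q)
    (hqγ : q * γ = γ) (hγp : γ * p = γ) (hpaγ : p * a * γ = p) (hγaq : γ * a * q = q) :
    IdempotentEquiv (a * b - p) (b * a - q) := by
  have haba' : a * (b * a) = a := by rw [← mul_assoc, haba]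
  set d := a - a * γ * a with hd
  have habd : (a * b - p) * d = d := by
    simp only [hd, sub_mul, mul_sub, ← mul_assoc, haba, hpaγ]
    abel
  have hdba : d * (b * a - q) = d := by
    rw [mul_assoc] at hγaq
    simp only [hd, sub_mul, mul_sub, mul_assoc, haba', hγaq, sub_self, sub_zero]
  have hγab : γ * (a * b) = γ := by rw [← hγp, mul_assoc, hp']
  have hbaγ : b * a * γ = γ := by rw [← hqγ, ← mul_assoc, hq]
  have hdb : d * b = a * b - a * γ := by
    rw [hd, sub_mul, mul_assoc (a * γ), mul_assoc a γ, hγab]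
  have hbd : b * d = b * a - γ * a := by
    rw [hd, mul_sub, ← mul_assoc, ← mul_assoc, hbaγ]
  have hleft : d * ((b * a - q) * b * (a * b - p)) = a * b - p :=
    calc d * ((b * a - q) * b * (a * b - p)) = (a * b - a * γ) * (a * b - p) := by
          rw [← mul_assoc, ← mul_assoc, hdba, hdb]
      _ = a * b - p := by
          rw [sub_mul, mul_sub, mul_sub, ← mul_assoc (a * b), haba, mul_assoc a γ, hγab, hp,
            mul_assoc a γ, hγp, sub_self, sub_zero]
  have hright : (b * a - q) * b * (a * b - p) * d = b * a - q :=
    calc (b * a - q) * b * (a * b - p) * d = (b * a - q) * (b * a - γ * a) := by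
          rw [mul_assoc, habd, mul_assoc, hbd]
      _ = b * a - q := by
          rw [mul_sub, sub_mul, sub_mul, mul_assoc b a, haba', hq', ← mul_assoc, hbaγ,
            ← mul_assoc, hqγ, sub_self, sub_zero]
  exact ⟨d, (b * a - q) * b * (a * b - p), by rw [hleft, habd], hleft, hright⟩

theorem exists_cancel [DecidableEq κ] {p q : R} {f : κ → R} {t : Finset κ}
    (hf : OrthogonalIdempotents f) (hf' : ∀ j, IsLocalIdempotent (f j))
    (h : IdempotentEquiv q (∑ j ∈ t, f j)) (hp : IsLocalIdempotent p) (hqp : q * p = p)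
    (hpq : p * q = p) :
    ∃ j ∈ t, IdempotentEquiv p (f j) ∧ IdempotentEquiv (q - p) (∑ l ∈ t.erase j, f l) := by
  obtain ⟨a, b, haba, rfl, hba⟩ := h
  obtain ⟨j, hj, γ, hfγ, hγp, hpaγ, hγaf⟩ := hp.exists_invertible_block hf' hpq hba
  have hbaf : b * a * f j = f j := by simp [hba, Finset.sum_mul, hf.mul_eq, hj]
  have hfba : f j * (b * a) = f j := by rw [hba, hf.mul_sum_of_mem hj]
  have hpafγ : p * a * f j * γ = p := by rw [mul_assoc, hfγ, hpaγ]
  refine ⟨j, hj, ⟨p * a * f j, γ, ?_, hpafγ, ?_⟩, ?_⟩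
  · rw [hpafγ, ← mul_assoc, ← mul_assoc, hp.idem.eq]
  · rw [← mul_assoc, ← mul_assoc, hγp, hγaf]
  · rw [Finset.sum_erase_eq_sub hj, ← hba]
    exact sub_of_invertible_block haba hqp hpq hbaf hfba hfγ hγp hpaγ hγaf

theorem exists_bijOn [Nonempty κ] {e : ι → R} {f : κ → R} (he : OrthogonalIdempotents e)
    (hf : OrthogonalIdempotents f) (he' : ∀ i, IsLocalIdempotent (e i))
    (hf' : ∀ j, IsLocalIdempotent (f j)) {s : Finset ι} {t : Finset κ}
    (h : IdempotentEquiv (∑ i ∈ s, e i) (∑ j ∈ t, f j)) :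
    ∃ σ : ι → κ, Set.BijOn σ s t ∧ ∀ i ∈ s, IdempotentEquiv (e i) (f (σ i)) := by
  classical
  induction s using Finset.induction_on generalizing t with
  | empty =>
    obtain ⟨a, b, haba, hab, hba⟩ := h
    rw [Finset.sum_empty] at hab
    have hsum : ∑ j ∈ t, f j = 0 := by rw [← hba, ← haba, hab, zero_mul, mul_zero]
    have ht : t = ∅ := Finset.eq_empty_of_forall_notMem fun j hj =>
      (hf' j).ne_zero (by rw [← hf.mul_sum_of_mem hj, hsum, mul_zero])
    simp [ht]
  | insert i s hi ih =>
    have hi' := Finset.mem_insert_self i s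
    obtain ⟨j, hj, hij, hrest⟩ := h.exists_cancel hf hf' (he' i)
      (by simp [Finset.sum_mul, he.mul_eq]) (he.mul_sum_of_mem hi')
    rw [Finset.sum_insert hi, add_sub_cancel_left] at hrest
    obtain ⟨σ, hσ, hσe⟩ := ih hrest
    have hupdate {l : ι} (hl : l ∈ s) : Function.update σ i j l = σ l :=
      Function.update_of_ne (ne_of_mem_of_not_mem hl hi) _ _
    refine ⟨Function.update σ i j, ?_, ?_⟩
    · have hs : Set.BijOn (Function.update σ i j) s (t.erase j) :=
        hσ.congr fun l hl => (hupdate hl).symm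
      rw [Finset.coe_insert, ← Finset.insert_erase hj, Finset.coe_insert]
      simpa only [Function.update_self] using hs.insert (a := i) (by simp)
    · rw [Finset.forall_mem_insert, Function.update_self]
      exact ⟨hij, fun l hl => (hupdate hl).symm ▸ hσe l hl⟩

theorem exists_equiv [Fintype ι] [Fintype κ] {e : ι → R} {f : κ → R}
    (he : CompleteOrthogonalIdempotents e) (hf : CompleteOrthogonalIdempotents f)
    (he' : ∀ i, IsLocalIdempotent (e i)) (hf' : ∀ j, IsLocalIdempotent (f j)) :
    ∃ σ : ι ≃ κ, ∀ i, IdempotentEquiv (e i) (f (σ i)) := by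
  rcases isEmpty_or_nonempty κ with hκ | hκ
  · have h01 : (0 : R) = 1 := by simpa using hf.complete
    have : IsEmpty ι := ⟨fun i => (he' i).ne_zero (eq_zero_of_zero_eq_one h01 _)⟩
    exact ⟨.equivOfIsEmpty ι κ, isEmptyElim⟩
  · have h : IdempotentEquiv (∑ i, e i) (∑ j, f j) :=
      ⟨1, 1, by simp, by simp [he.complete], by simp [hf.complete]⟩
    obtain ⟨σ, hσ, hσe⟩ := exists_bijOn he.toOrthogonalIdempotents hf.toOrthogonalIdempotents
      he' hf' h
    rw [Finset.coe_univ, Finset.coe_univ, Set.bijOn_univ] at hσ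
    exact ⟨.ofBijective σ hσ, fun i => hσe i (Finset.mem_univ i)⟩

end IdempotentEquiv

end Idempotents

section InternalDirectSum

variable {R M ι : Type*} [Semiring R] [AddCommMonoid M] [Module R M] [DecidableEq ι]
  {U : ι → Submodule R M}

/-- The projection of an internal direct sum onto its `i`-th summand. -/
noncomputable def internalProj (hU : DirectSum.IsInternal U) (i : ι) : M →ₗ[R] U i :=
  DirectSum.component R ι (fun i => U i) i ∘ₗ
    (LinearEquiv.ofBijective (DirectSum.coeLinearMap U) hU).symm

theorem internalProj_of_mem (hU : DirectSum.IsInternal U) {i : ι} {x : M} (hx : x ∈ U i) :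
    internalProj hU i x = ⟨x, hx⟩ :=
  hU.ofBijective_coeLinearMap_of_mem hx

theorem internalProj_of_mem_ne (hU : DirectSum.IsInternal U) {i j : ι} (hij : i ≠ j) {x : M}
    (hx : x ∈ U i) : internalProj hU j x = 0 :=
  hU.ofBijective_coeLinearMap_of_mem_ne hij hx

theorem sum_internalProj [Fintype ι] (hU : DirectSum.IsInternal U) (x : M) :
    ∑ i, (internalProj hU i x : M) = x := by
  have hx : x ∈ ⨆ i, U i := hU.submodule_iSup_eq_top ▸ Submodule.mem_top
  induction hx using Submodule.iSup_induction' with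
  | mem j x hx =>
    rw [Fintype.sum_eq_single j fun i hij => by rw [internalProj_of_mem_ne hU hij.symm hx]; rfl,
      internalProj_of_mem hU hx]
  | zero => simp
  | add x y _ _ hx hy => simp only [map_add, Submodule.coe_add, Finset.sum_add_distrib, hx, hy]

end InternalDirectSum

-- The Fitting decomposition of the restriction of `f` to `S` is contained in that of `f`.
theorem eq_inf_iSup_ker_pow_sup_inf_iInf_range_pow {R M : Type*} [Ring R] [AddCommGroup M]
    [Module R M] [IsArtinian R M] [IsNoetherian R M] {f : Module.End R M} {S : Submodule R M}
    (hf : ∀ x ∈ S, f x ∈ S) :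
    S = (S ⊓ ⨆ n, (f ^ n).ker) ⊔ (S ⊓ ⨅ n, (f ^ n).range) := by
  refine le_antisymm (fun x hx => ?_) (sup_le inf_le_left inf_le_left)
  let g : Module.End R S := f.restrict hf
  have hg (n : ℕ) (y : S) : ((g ^ n) y : M) = (f ^ n) y := by
    rw [Module.End.pow_restrict]
    rfl
  have hker : (⨆ n, (g ^ n).ker).map S.subtype ≤ ⨆ n, (f ^ n).ker := by
    rw [Submodule.map_iSup]
    refine iSup_mono fun n => Submodule.map_le_iff_le_comap.2 fun y hy => ?_
    simpa [hg] using congrArg Subtype.val (LinearMap.mem_ker.1 hy)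
  have hrange : (⨅ n, (g ^ n).range).map S.subtype ≤ ⨅ n, (f ^ n).range := by
    refine le_iInf fun n => Submodule.map_le_iff_le_comap.2 fun y hy => ?_
    obtain ⟨z, rfl⟩ := (Submodule.mem_iInf _).1 hy n
    exact ⟨z, (hg n z).symm⟩
  obtain ⟨y, hy, z, hz, hyz⟩ := Submodule.mem_sup.1
    (g.isCompl_iSup_ker_pow_iInf_range_pow.sup_eq_top ▸ Submodule.mem_top :
      (⟨x, hx⟩ : S) ∈ (⨆ n, (g ^ n).ker) ⊔ ⨅ n, (g ^ n).range)
  exact Submodule.mem_sup.2 ⟨y, ⟨y.2, hker (Submodule.mem_map_of_mem hy)⟩,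
    z, ⟨z.2, hrange (Submodule.mem_map_of_mem hz)⟩, congrArg Subtype.val hyz⟩

section PosetRepresentation

variable {k V V' W W' P : Type*} [Field k] [AddCommGroup V] [Module k V]
  [AddCommGroup V'] [Module k V'] [AddCommGroup W] [Module k W] [AddCommGroup W'] [Module k W']

/-- A morphism of poset representations: a linear map of the ambient spaces carrying each subspace
into the corresponding one. -/
def IsRepHom (χ : P → Submodule k W) (χ' : P → Submodule k W') (f : W →ₗ[k] W') : Prop :=
  ∀ p, ∀ x ∈ χ p, f x ∈ χ' p

/-- The endomorphism algebra of a poset representation. -/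
def repEnd (ψ : P → Submodule k V) : Subalgebra k (Module.End k V) where
  carrier := {f | IsRepHom ψ ψ f}
  mul_mem' hf hg p x hx := hf p _ (hg p x hx)
  add_mem' hf hg p x hx := add_mem (hf p x hx) (hg p x hx)
  algebraMap_mem' c p _ hx := (ψ p).smul_mem c hx

theorem IsRepHom.comp {χ : P → Submodule k W} {ψ : P → Submodule k V} {χ' : P → Submodule k W'}
    {g : V →ₗ[k] W'} {f : W →ₗ[k] V} (hg : IsRepHom ψ χ' g) (hf : IsRepHom χ ψ f) :
    IsRepHom χ χ' (g ∘ₗ f) :=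
  fun p x hx => hg p _ (hf p x hx)

theorem repIso_iff_isRepHom {χ : P → Submodule k W} {χ' : P → Submodule k W'} :
    RepIso χ χ' ↔ ∃ g : W ≃ₗ[k] W', IsRepHom χ χ' g ∧ IsRepHom χ' χ g.symm := by
  refine exists_congr fun g => ⟨fun hg => ⟨fun p x hx => ?_, fun p y hy => ?_⟩, fun hg p => ?_⟩
  · exact hg p ▸ Submodule.mem_map_of_mem hx
  · rwa [← hg p, Submodule.mem_map_equiv] at hy
  · exact le_antisymm (Submodule.map_le_iff_le_comap.2 (hg.1 p))
      fun y hy => ⟨g.symm y, hg.2 p y hy, g.apply_symm_apply y⟩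

namespace IsIndecompRep

variable {χ : P → Submodule k W} [FiniteDimensional k W]

theorem isNilpotent_or_isUnit (hχ : IsIndecompRep χ) (f : repEnd χ) :
    IsNilpotent f ∨ IsUnit f := by
  rcases hχ.2 _ _ f.1.isCompl_iSup_ker_pow_iInf_range_pow fun p =>
    eq_inf_iSup_ker_pow_sup_inf_iInf_range_pow (f.2 p) with hker | hrange
  · right
    have hf : Function.Injective f.1 := LinearMap.ker_eq_bot.1 <| eq_bot_iff.2 <| by
      simpa only [pow_one] using hker ▸ le_iSup (fun n => (f.1 ^ n).ker) 1
    have : IsArtinianRing (repEnd χ)ᵐᵒᵖ := .of_finite k _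
    exact IsArtinianRing.isUnit_iff_isLeftRegular.2 fun g h hgh =>
      Subtype.ext (LinearMap.ext fun x => hf (LinearMap.congr_fun (congrArg Subtype.val hgh) x))
  · left
    obtain ⟨n, hn⟩ := f.1.eventually_iSup_ker_pow_eq.exists
    have htop := f.1.isCompl_iSup_ker_pow_iInf_range_pow.sup_eq_top
    rw [hrange, sup_bot_eq, hn, LinearMap.ker_eq_top] at htop
    exact ⟨n, Subtype.ext htop⟩

theorem isLocalRing_repEnd (hχ : IsIndecompRep χ) : IsLocalRing (repEnd χ) := by
  have := hχ.1
  refine .of_isUnit_or_isUnit_one_sub_self fun f => ?_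
  exact (hχ.isNilpotent_or_isUnit f).symm.imp_right IsNilpotent.isUnit_one_sub

end IsIndecompRep

/-- A presentation of `χ` as a direct summand of `ψ`, by morphisms of representations. -/
structure RepRetract (ψ : P → Submodule k V) (χ : P → Submodule k W) where
  incl : W →ₗ[k] V
  proj : V →ₗ[k] W
  isRepHom_incl : IsRepHom χ ψ incl
  isRepHom_proj : IsRepHom ψ χ proj
  proj_comp_incl : proj ∘ₗ incl = .id

namespace RepRetract

variable {ψ : P → Submodule k V} {ψ' : P → Submodule k V'} {χ : P → Submodule k W}
  {χ' : P → Submodule k W'}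

theorem proj_incl (r : RepRetract ψ χ) (x : W) : r.proj (r.incl x) = x :=
  LinearMap.congr_fun r.proj_comp_incl x

/-- The idempotent endomorphism of `ψ` projecting onto the summand `χ`. -/
def idem (r : RepRetract ψ χ) : repEnd ψ :=
  ⟨r.incl ∘ₗ r.proj, r.isRepHom_incl.comp r.isRepHom_proj⟩

theorem isIdempotentElem_idem (r : RepRetract ψ χ) : IsIdempotentElem r.idem :=
  Subtype.ext (LinearMap.ext fun x => congrArg r.incl (r.proj_incl (r.proj x)))

/-- The endomorphism algebra of a direct summand is a corner of the endomorphism algebra. -/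
def cornerEquiv (r : RepRetract ψ χ) : r.isIdempotentElem_idem.Corner ≃+* repEnd χ where
  toFun a := ⟨r.proj ∘ₗ a.1.1 ∘ₗ r.incl, r.isRepHom_proj.comp (.comp a.1.2 r.isRepHom_incl)⟩
  invFun g := ⟨⟨r.incl ∘ₗ g.1 ∘ₗ r.proj, r.isRepHom_incl.comp (.comp g.2 r.isRepHom_proj)⟩,
    (Subsemigroup.mem_corner_iff r.isIdempotentElem_idem).2
      ⟨Subtype.ext (LinearMap.ext fun x => congrArg r.incl (r.proj_incl _)),
        Subtype.ext (LinearMap.ext fun x => congrArg (r.incl ∘ₗ g.1) (r.proj_incl _))⟩⟩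
  left_inv a := by
    obtain ⟨hea, hae⟩ := (Subsemigroup.mem_corner_iff r.isIdempotentElem_idem).1 a.2
    refine Subtype.ext ?_
    change r.idem * a.1 * r.idem = a.1
    rw [hea, hae]
  right_inv g := Subtype.ext <| LinearMap.ext fun x =>
    (r.proj_incl _).trans (congrArg g.1 (r.proj_incl x))
  map_mul' a b := by
    obtain ⟨hea, -⟩ := (Subsemigroup.mem_corner_iff r.isIdempotentElem_idem).1 b.2
    refine Subtype.ext (LinearMap.ext fun x => congrArg (r.proj ∘ₗ a.1.1) ?_)
    exact (congrArg (fun c : repEnd ψ => c.1 (r.incl x)) hea).symm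
  map_add' a b := Subtype.ext (LinearMap.ext fun x => map_add r.proj _ _)

theorem isLocalIdempotent_idem (r : RepRetract ψ χ) [IsLocalRing (repEnd χ)] :
    IsLocalIdempotent r.idem where
  idem := r.isIdempotentElem_idem
  isLocalRing := RingHom.domain_isLocalRing (r.cornerEquiv : _ →+* repEnd χ)

theorem repIso_of_idempotentEquiv (r : RepRetract ψ χ) (r' : RepRetract ψ χ')
    (h : IdempotentEquiv r.idem r'.idem) : RepIso χ χ' := by
  obtain ⟨a, b, -, hab, hba⟩ := h
  replace hab (x : V) : a.1 (b.1 x) = r.incl (r.proj x) :=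
    congrArg (fun c : repEnd ψ => c.1 x) hab
  replace hba (x : V) : b.1 (a.1 x) = r'.incl (r'.proj x) :=
    congrArg (fun c : repEnd ψ => c.1 x) hba
  refine repIso_iff_isRepHom.2 ⟨.ofLinearMap (r'.proj ∘ₗ b.1 ∘ₗ r.incl) (r.proj ∘ₗ a.1 ∘ₗ r'.incl)
    (LinearMap.ext fun y => ?_) (LinearMap.ext fun x => ?_),
    r'.isRepHom_proj.comp (.comp b.2 r.isRepHom_incl),
    r.isRepHom_proj.comp (.comp a.2 r'.isRepHom_incl)⟩
  · simp [← hab, hba, r'.proj_incl]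
  · simp [← hba, hab, r.proj_incl]

/-- Transport of a direct summand along an isomorphism of representations. -/
def congr (r : RepRetract ψ' χ) (φ : V ≃ₗ[k] V') (hφ : IsRepHom ψ ψ' φ)
    (hφ' : IsRepHom ψ' ψ φ.symm) : RepRetract ψ χ where
  incl := φ.symm ∘ₗ r.incl
  proj := r.proj ∘ₗ φ
  isRepHom_incl := hφ'.comp r.isRepHom_incl
  isRepHom_proj := r.isRepHom_proj.comp hφ
  proj_comp_incl := LinearMap.ext fun x => by simp [r.proj_incl]

theorem completeOrthogonalIdempotents_congr {ι : Type*} [Fintype ι] {X : ι → Type*}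
    [∀ i, AddCommGroup (X i)] [∀ i, Module k (X i)] {χ : ∀ i, P → Submodule k (X i)}
    {r : ∀ i, RepRetract ψ' (χ i)} (hr : CompleteOrthogonalIdempotents fun i => (r i).idem)
    (φ : V ≃ₗ[k] V') (hφ : IsRepHom ψ ψ' φ) (hφ' : IsRepHom ψ' ψ φ.symm) :
    CompleteOrthogonalIdempotents fun i => ((r i).congr φ hφ hφ').idem := by
  rw [← CompleteOrthogonalIdempotents.map_injective_iff ((repEnd ψ).val : _ →+* Module.End k V)
    Subtype.val_injective]
  exact (hr.map ((repEnd ψ').val : _ →+* Module.End k V')).map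
    (φ.symm.conjRingEquiv : _ →+* Module.End k V)

end RepRetract

section Decomposition

variable {ι : Type*} [DecidableEq ι] {ψ : P → Submodule k V} {U : ι → Submodule k V}

theorem isRepHom_internalProj (hU : DirectSum.IsInternal U) (hdec : ∀ p, ψ p = ⨆ i, ψ p ⊓ U i)
    (i : ι) : IsRepHom ψ (restrictRep ψ (U i)) (internalProj hU i) := by
  intro p
  suffices ψ p ≤ (restrictRep ψ (U i) p).comap (internalProj hU i) from this
  rw [hdec p]
  refine iSup_le fun j x hx => ?_
  rw [Submodule.mem_comap]
  rcases eq_or_ne j i with rfl | hji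
  · rw [internalProj_of_mem hU hx.2]
    exact hx.1
  · rw [internalProj_of_mem_ne hU hji hx.2]
    exact zero_mem _

namespace RepRetract

/-- A summand of a decomposition of a representation, as a direct summand of it. -/
noncomputable def ofIsInternal (hU : DirectSum.IsInternal U) (hdec : ∀ p, ψ p = ⨆ i, ψ p ⊓ U i)
    (i : ι) : RepRetract ψ (restrictRep ψ (U i)) where
  incl := (U i).subtype
  proj := internalProj hU i
  isRepHom_incl _ _ hx := hx
  isRepHom_proj := isRepHom_internalProj hU hdec i
  proj_comp_incl := LinearMap.ext fun x => internalProj_of_mem hU x.2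

theorem completeOrthogonalIdempotents_ofIsInternal [Fintype ι] (hU : DirectSum.IsInternal U)
    (hdec : ∀ p, ψ p = ⨆ i, ψ p ⊓ U i) :
    CompleteOrthogonalIdempotents fun i => (ofIsInternal hU hdec i).idem where
  idem i := isIdempotentElem_idem _
  ortho i j hij := Subtype.ext <| LinearMap.ext fun x =>
    congrArg Subtype.val (internalProj_of_mem_ne hU hij.symm (internalProj hU j x).2)
  complete := Subtype.ext <| LinearMap.ext fun x => by
    rw [AddSubmonoidClass.coe_finsetSum, LinearMap.sum_apply]
    exact sum_internalProj hU x

end RepRetract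

end Decomposition

end PosetRepresentation

theorem krull_remak_schmidt_for_poset_representations_general
    {k V V' P ι ι' : Type*} [Field k] [AddCommGroup V] [Module k V] [FiniteDimensional k V]
    [AddCommGroup V'] [Module k V'] [DecidableEq ι] [DecidableEq ι']
    {ψ : P → Submodule k V} {ψ' : P → Submodule k V'} (hiso : RepIso ψ ψ')
    {U : ι → Submodule k V} {U' : ι' → Submodule k V'}
    (hU : DirectSum.IsInternal U) (hU' : DirectSum.IsInternal U')
    (hdec : ∀ p, ψ p = ⨆ i, ψ p ⊓ U i) (hdec' : ∀ p, ψ' p = ⨆ i, ψ' p ⊓ U' i)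
    (hind : ∀ i, IsIndecompRep (restrictRep ψ (U i)))
    (hind' : ∀ i, IsIndecompRep (restrictRep ψ' (U' i))) :
    ∃ σ : ι ≃ ι', ∀ i, RepIso (restrictRep ψ (U i)) (restrictRep ψ' (U' (σ i))) := by
  obtain ⟨φ, hφ, hφ'⟩ := repIso_iff_isRepHom.1 hiso
  have : FiniteDimensional k V' := .equiv φ
  have : Finite ι := WellFoundedGT.finite_of_iSupIndep hU.submodule_iSupIndep
    fun i => Submodule.nontrivial_iff_ne_bot.1 (hind i).1
  have : Finite ι' := WellFoundedGT.finite_of_iSupIndep hU'.submodule_iSupIndep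
    fun j => Submodule.nontrivial_iff_ne_bot.1 (hind' j).1
  have (i : ι) := (hind i).isLocalRing_repEnd
  have (j : ι') := (hind' j).isLocalRing_repEnd
  cases nonempty_fintype ι
  cases nonempty_fintype ι'
  obtain ⟨σ, hσ⟩ := IdempotentEquiv.exists_equiv
    (RepRetract.completeOrthogonalIdempotents_ofIsInternal hU hdec)
    (RepRetract.completeOrthogonalIdempotents_congr
      (RepRetract.completeOrthogonalIdempotents_ofIsInternal hU' hdec') φ hφ hφ')
    (fun _ => RepRetract.isLocalIdempotent_idem _) (fun _ => RepRetract.isLocalIdempotent_idem _)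
  exact ⟨σ, fun i => RepRetract.repIso_of_idempotentEquiv _ _ (hσ i)⟩

/-- (Krull–Remak–Schmidt for poset representations.)  If `ψ` and `ψ'`
are isomorphic representations of a poset `P` over a field `k`, decomposed into
indecomposable subrepresentations along internal direct sum decompositions
`V = U₁ ⊕ ⋯ ⊕ Uₙ` and `V' = U'₁ ⊕ ⋯ ⊕ U'ₙ'`, then `n = n'` and after a permutation the
restricted representations are pairwise isomorphic. -/
theorem krull_remak_schmidt_for_poset_representations
    {k V V' P : Type*} [Field k]
    [AddCommGroup V] [Module k V] [FiniteDimensional k V]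
    [AddCommGroup V'] [Module k V'] [FiniteDimensional k V']
    [PartialOrder P]
    (ψ : P → Submodule k V) (hψ : Monotone ψ)
    (ψ' : P → Submodule k V') (hψ' : Monotone ψ')
    (hiso : RepIso ψ ψ')
    {n n' : ℕ} (U : Fin n → Submodule k V) (U' : Fin n' → Submodule k V')
    (hU : DirectSum.IsInternal U) (hU' : DirectSum.IsInternal U')
    (hdec : ∀ p, ψ p = ⨆ i, ψ p ⊓ U i)
    (hdec' : ∀ p, ψ' p = ⨆ i, ψ' p ⊓ U' i)
    (hind : ∀ i, IsIndecompRep (restrictRep ψ (U i)))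
    (hind' : ∀ i, IsIndecompRep (restrictRep ψ' (U' i))) :
    n = n' ∧ ∃ σ : Fin n ≃ Fin n', ∀ i,
      RepIso (restrictRep ψ (U i)) (restrictRep ψ' (U' (σ i))) := by
  obtain ⟨σ, hσ⟩ := krull_remak_schmidt_for_poset_representations_general hiso hU hU' hdec hdec'
    hind hind'
  exact ⟨by simpa using Fintype.card_congr σ, σ, hσ⟩
end

section
/- Let k be a perfect field of characteristic ≠ 2, V a finite-dimensional k-vector space, and (I₁, C₁, I₂, C₂, I₃, C₃) an indecomposable sextuple in V. The following are equivalent: (1) there exists a nondegenerate alternating bilinear form ω on V such that, for each i ∈ {1, 2, 3}, the ω-orthogonal {v ∈ V : ω(v, w) = 0 for all w ∈ Iᵢ} equals Cᵢ; (2) the sextuple is self-dual and dim V is even. -/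
/-!
By Fitting's lemma every endomorphism of an indecomposable sextuple is nilpotent or bijective. Let
`B` be a self-duality, regarded as a bilinear form, and define `τ` by `B (τ x) y = B y x`. Since
`(1 - τ) + (1 + τ) = 2`, one of `1 - τ`, `1 + τ` is invertible. In the first case
`B ∘ (1 - τ) = B - Bᵀ` is an alternating self-duality. In the second case `B` may be replaced by the
symmetric self-duality `B ∘ (1 + τ)`.

For any self-duality `B`, the subspaces `V₀ = 0`, `Vₙ₊₁ = I (n + 1) ∩ (Vₙ + C (n - 1))`, with
indices modulo three, consist of the endpoints of chains of vectors. Reflection functors shorten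
chains and show that `Vₙ ∩ C (n - 1) = 0`, while `Vₙ ⊆ C (n - 1) + I (n + 1)` because a
counterexample, paired by `B` with a chain in the opposite direction, gives an endomorphism which is
neither nilpotent nor injective. Hence `dim Vₙ₊₁ = dim Vₙ + dim (I (n + 1) ∩ C (n - 1))`, and
boundedness of `dim Vₙ` forces `V = I i ⊕ C j` for `i ≠ j`.

The sextuple is therefore given by a pair of maps `a : W → U`, `b : U → W`, with `V = W × W × U`. A
symmetric self-duality `B` makes `g = 1 + (b a, b a, a b)` an isometric endomorphism. The form
`ω(x, y) = B(g x, y) - B(x, g y)` is alternating and `ω ∘ g = B ∘ (g² - 1)`, so it is a self-duality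
as soon as `g - 1` and `g + 1` are both invertible. If one of them is nilpotent, Fitting's
alternative for the pair `a, b` shows that its kernel on `U` has dimension at most one. Skew forms
have even rank, so `g² - 1` has even rank on `U`; as `dim V = 2 dim W + dim U` is even, this kernel
vanishes, and then so does `V`.
-/

open Module Submodule

section Families

variable {k V ι : Type*} [Field k] [AddCommGroup V] [Module k V] {X : ι → Submodule k V}

/-- The algebra of endomorphisms of a vector space preserving every member of a family of
subspaces, that is, the endomorphism algebra of the corresponding poset representation. -/
def familyEnd (X : ι → Submodule k V) : Subalgebra k (End k V) where
  carrier := {f | ∀ i, ∀ x ∈ X i, f x ∈ X i}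
  mul_mem' hf hg i x hx := hf i _ (hg i x hx)
  add_mem' hf hg i x hx := (X i).add_mem (hf i x hx) (hg i x hx)
  algebraMap_mem' c i _ hx := (X i).smul_mem c hx

/-- A family of subspaces of a nonzero vector space which is not the direct sum of two families in
complementary nonzero subspaces. Only the nontrivial inclusion of
`X i = (X i ⊓ A) ⊔ (X i ⊓ B)` is recorded. -/
structure IsIndecomposable (X : ι → Submodule k V) : Prop where
  nontrivial : Nontrivial V
  eq_bot_or_eq_bot : ∀ A B : Submodule k V, IsCompl A B →
    (∀ i, X i ≤ (X i ⊓ A) ⊔ (X i ⊓ B)) → A = ⊥ ∨ B = ⊥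

theorem isIndecomposable_of_isIdempotentElem [Nontrivial V]
    (h : ∀ f ∈ familyEnd X, IsIdempotentElem f → f = 0 ∨ f = 1) : IsIndecomposable X where
  nontrivial := ‹_›
  eq_bot_or_eq_bot A B hAB hX := by
    have hmem : A.projection B hAB ∈ familyEnd X := by
      intro i x hx
      obtain ⟨a, ⟨haX, haA⟩, b, ⟨-, hbB⟩, rfl⟩ := mem_sup.1 (hX i hx)
      rwa [map_add, (projection_eq_self_iff hAB a).2 haA, (projection_apply_eq_zero_iff hAB).2 hbB,
        add_zero]
    rcases h _ hmem (isIdempotentElem_projection hAB) with h0 | h1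
    · left
      rw [← range_projection hAB, h0, LinearMap.range_zero]
    · right
      rw [← ker_projection hAB, h1, End.one_eq_id, LinearMap.ker_id]

namespace IsIndecomposable

theorem comp_equiv {κ : Type*} (h : IsIndecomposable X) (e : κ ≃ ι) :
    IsIndecomposable (X ∘ e) where
  nontrivial := h.nontrivial
  eq_bot_or_eq_bot A B hAB hX :=
    h.eq_bot_or_eq_bot A B hAB fun i => by simpa using hX (e.symm i)

end IsIndecomposable

theorem eventually_le_inf_ker_pow_sup_inf_range_pow [FiniteDimensional k V] (f : End k V)
    {Y : Submodule k V} (hY : ∀ y ∈ Y, f y ∈ Y) :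
    ∀ᶠ n in Filter.atTop,
      Y ≤ (Y ⊓ LinearMap.ker (f ^ n)) ⊔ (Y ⊓ LinearMap.range (f ^ n)) := by
  filter_upwards [(f.restrict hY).eventually_isCompl_ker_pow_range_pow] with n hn y hy
  rw [End.pow_restrict] at hn
  obtain ⟨a, ha, _, ⟨c, rfl⟩, hac⟩ := mem_sup.1 (hn.sup_eq_top ▸ mem_top : (⟨y, hy⟩ : Y) ∈ _)
  exact mem_sup.2 ⟨a, ⟨a.2, congrArg Subtype.val ha⟩, _, ⟨Subtype.prop _, c, rfl⟩,
    congrArg Subtype.val hac⟩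

namespace IsIndecomposable

variable [FiniteDimensional k V] [Finite ι]

theorem isNilpotent_or_bijective (h : IsIndecomposable X) {f : End k V} (hf : f ∈ familyEnd X) :
    IsNilpotent f ∨ Function.Bijective f := by
  obtain ⟨n, ⟨hX, hn⟩, hn0⟩ := (((Filter.eventually_all.2 fun i =>
    eventually_le_inf_ker_pow_sup_inf_range_pow f (hf i)).and
      f.eventually_isCompl_ker_pow_range_pow).and (Filter.eventually_ne_atTop 0)).exists
  rcases h.eq_bot_or_eq_bot _ _ hn hX with hker | hrange
  · rw [LinearMap.ker_eq_bot, End.coe_pow] at hker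
    have hinj : Function.Injective f := by
      rw [← Nat.succ_pred_eq_of_ne_zero hn0, Function.iterate_succ] at hker
      exact hker.of_comp
    exact Or.inr ⟨hinj, LinearMap.injective_iff_surjective.1 hinj⟩
  · exact Or.inl ⟨n, LinearMap.range_eq_bot.1 hrange⟩

theorem eq_zero_or_eq_one (h : IsIndecomposable X) {f : End k V} (hf : f ∈ familyEnd X)
    (hi : IsIdempotentElem f) : f = 0 ∨ f = 1 := by
  refine (h.isNilpotent_or_bijective hf).imp hi.eq_zero_of_isNilpotent fun hbij => ?_
  ext x
  exact hbij.1 (LinearMap.congr_fun hi.eq x)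

theorem span_singleton_eq_top (h : IsIndecomposable X) {x : V} {φ : Dual k V} (hφ : φ x = 1)
    (hf : φ.smulRight x ∈ familyEnd X) : k ∙ x = ⊤ := by
  have hid : IsIdempotentElem (φ.smulRight x) := by
    ext
    simp [hφ]
  rcases h.eq_zero_or_eq_one hf hid with h0 | h1
  · have hx : x = 0 := by simpa [hφ] using LinearMap.congr_fun h0 x
    simp [hx] at hφ
  · exact eq_top_iff.2 fun y _ => mem_span_singleton.2 ⟨φ y, LinearMap.congr_fun h1 y⟩

end IsIndecomposable

end Families

section Sextuples

variable {k V : Type*} [Field k] [AddCommGroup V] [Module k V] {I C : ZMod 3 → Submodule k V}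

/-- An indecomposable sextuple: an indecomposable representation of the poset `2 + 2 + 2`, with
isotropic slots `I j` and coisotropic slots `C j`. The three pairs are indexed by `ZMod 3`, so that
the two other indices are `j + 1` and `j - 1`. -/
structure IndecSextuple (I C : ZMod 3 → Submodule k V) : Prop
    extends IsIndecomposable (Sum.elim I C) where
  le : ∀ j, I j ≤ C j

/-- The endomorphism algebra of a sextuple. -/
abbrev sextupleEnd (I C : ZMod 3 → Submodule k V) : Subalgebra k (End k V) :=
  familyEnd (Sum.elim I C)

theorem mem_sextupleEnd {f : End k V} :
    f ∈ sextupleEnd I C ↔ (∀ j, ∀ x ∈ I j, f x ∈ I j) ∧ ∀ j, ∀ x ∈ C j, f x ∈ C j :=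
  Sum.forall

/-- The vanishing of the defect of a sextuple, regarded as a representation of the extended Dynkin
quiver of type `E₆`. It holds for self-dual sextuples. -/
def HasDefectZero (I C : ZMod 3 → Submodule k V) : Prop :=
  ∑ j, (finrank k (I j) + finrank k (C j)) = 3 * finrank k V

theorem HasDefectZero.comp_equiv (h : HasDefectZero I C) (e : ZMod 3 ≃ ZMod 3) :
    HasDefectZero (I ∘ e) (C ∘ e) :=
  (e.sum_comp fun j => finrank k (I j) + finrank k (C j)).trans h

theorem exists_dual_smul_mem {x : V} (hx : x ≠ 0) {P Q : Submodule k V} (hPQ : P ≤ Q) :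
    ∃ φ : Dual k V, φ x = 1 ∧ (∀ y ∈ P, φ y • x ∈ P) ∧ ∀ y ∈ Q, φ y • x ∈ Q := by
  have exists_dual {R : Submodule k V} (hR : x ∉ R) : ∃ φ : Dual k V, φ x = 1 ∧
      ∀ S ≤ R, ∀ y ∈ S, φ y • x ∈ S := by
    obtain ⟨φ, hφx, hφR⟩ := R.exists_le_ker_of_notMem hR
    exact ⟨(φ x)⁻¹ • φ, by simp [hφx], fun S hS y hy => by simp [LinearMap.mem_ker.1 (hφR (hS hy))]⟩
  by_cases hxP : x ∈ P
  · obtain ⟨φ, hφ, -⟩ := exists_dual (R := ⊥) (by simpa using hx)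
    exact ⟨φ, hφ, fun _ _ => P.smul_mem _ hxP, fun _ _ => Q.smul_mem _ (hPQ hxP)⟩
  by_cases hxQ : x ∈ Q
  · obtain ⟨φ, hφ, hφP⟩ := exists_dual hxP
    exact ⟨φ, hφ, hφP P le_rfl, fun _ _ => Q.smul_mem _ hxQ⟩
  · obtain ⟨φ, hφ, hφQ⟩ := exists_dual hxQ
    exact ⟨φ, hφ, hφQ P hPQ, hφQ Q le_rfl⟩

namespace IndecSextuple

theorem comp_equiv (h : IndecSextuple I C) (e : ZMod 3 ≃ ZMod 3) :
    IndecSextuple (I ∘ e) (C ∘ e) where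
  toIsIndecomposable := by
    rw [← Sum.elim_comp_map]
    exact h.toIsIndecomposable.comp_equiv (e.sumCongr e)
  le j := h.le (e j)

theorem disjoint_isotropic [FiniteDimensional k V] (h : IndecSextuple I C)
    (hd : HasDefectZero I C) {i j : ZMod 3} (hij : i ≠ j) : Disjoint (I i) (I j) := by
  rw [disjoint_def]
  intro x hi hj
  by_contra hx
  obtain ⟨l, hl⟩ : ∃ l, ∀ m, m = i ∨ m = j ∨ m = l :=
    (by decide : ∀ i j : ZMod 3, i ≠ j → ∃ l, ∀ m, m = i ∨ m = j ∨ m = l) i j hij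
  obtain ⟨φ, hφ, hφI, hφC⟩ := exists_dual_smul_mem hx (h.le l)
  have hmem : φ.smulRight x ∈ sextupleEnd I C := by
    refine mem_sextupleEnd.2 ⟨fun m y hy => ?_, fun m y hy => ?_⟩ <;>
      rcases hl m with rfl | rfl | rfl
    exacts [(I m).smul_mem _ hi, (I m).smul_mem _ hj, hφI y hy,
      (C m).smul_mem _ (h.le m hi), (C m).smul_mem _ (h.le m hj), hφC y hy]
  have htop := h.span_singleton_eq_top hφ hmem
  have eq_top {P : Submodule k V} (hP : x ∈ P) : P = ⊤ :=
    eq_top_iff.2 (htop ▸ (span_singleton_le_iff_mem x P).2 hP)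
  have hV : finrank k V = 1 := by rw [← finrank_top, ← htop, finrank_span_singleton hx]
  have hle : ∑ m ∈ {i, j}, (finrank k (I m) + finrank k (C m)) ≤
      ∑ m, (finrank k (I m) + finrank k (C m)) :=
    Finset.sum_le_sum_of_subset (Finset.subset_univ _)
  rw [Finset.sum_pair hij, hd, eq_top hi, eq_top hj, eq_top (h.le _ hi), eq_top (h.le _ hj),
    finrank_top, hV] at hle
  omega

end IndecSextuple

end Sextuples

section Reflection

section Maps

variable {k V ι : Type*} [Field k] [AddCommGroup V] [Module k V]

/-- The cokernel of the diagonal map `V → Π i, V ⧸ I i`: the ambient space of the reflection of a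
family of subspaces. -/
abbrev reflectionSpace (I : ι → Submodule k V) : Type _ :=
  (Π i, V ⧸ I i) ⧸ LinearMap.range (LinearMap.pi fun i => (I i).mkQ)

/-- The structure maps `V → V ⧸ I i → reflectionSpace I` of the reflection. -/
def reflectionMap [DecidableEq ι] (I : ι → Submodule k V) (i : ι) : V →ₗ[k] reflectionSpace I :=
  mkQ _ ∘ₗ LinearMap.single k (fun j => V ⧸ I j) i ∘ₗ (I i).mkQ

variable [DecidableEq ι] {I : ι → Submodule k V}

theorem reflectionSpace_hom_ext [Finite ι] {W : Type*} [AddCommGroup W] [Module k W]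
    {g h : reflectionSpace I →ₗ[k] W}
    (hgh : ∀ i v, g (reflectionMap I i v) = h (reflectionMap I i v)) : g = h :=
  linearMap_qext _ <| LinearMap.pi_ext' fun i => linearMap_qext _ <| LinearMap.ext (hgh i)

variable [Fintype ι]

theorem sum_reflectionMap_eq_zero_iff {p : ι → V} :
    ∑ i, reflectionMap I i (p i) = 0 ↔ ∃ v, ∀ i, p i - v ∈ I i := by
  have hsum : ∑ i, reflectionMap I i (p i) = mkQ _ fun i => (I i).mkQ (p i) := by
    simp only [reflectionMap, LinearMap.comp_apply, ← map_sum, LinearMap.coe_single,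
      Finset.univ_sum_single]
  rw [hsum, ← LinearMap.mem_ker, ker_mkQ, LinearMap.mem_range]
  simp only [funext_iff, LinearMap.pi_apply, mkQ_apply, Submodule.Quotient.eq]
  exact exists_congr fun v => forall_congr' fun i => sub_mem_comm_iff

theorem sum_reflectionMap (v : V) : ∑ i, reflectionMap I i v = 0 :=
  sum_reflectionMap_eq_zero_iff.2 ⟨v, fun i => by simp⟩

end Maps

universe u v

variable {k : Type u} {V : Type v} [Field k] [AddCommGroup V] [Module k V]
  {I C : ZMod 3 → Submodule k V}

theorem reflectionMap_eq_zero_iff (hI : Pairwise (Function.onFun Disjoint I)) {i : ZMod 3} {v : V} :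
    reflectionMap I i v = 0 ↔ v ∈ I i := by
  have hsum : ∑ j, reflectionMap I j ((Pi.single i v : ZMod 3 → V) j) = reflectionMap I i v :=
    (Finset.sum_eq_single i (fun j _ hj => by simp [hj]) (by simp)).trans (by simp)
  rw [← hsum, sum_reflectionMap_eq_zero_iff]
  constructor
  · rintro ⟨a, ha⟩
    have haI : ∀ j, j ≠ i → a ∈ I j := fun j hj => by simpa [hj] using ha j
    have h0 : a = 0 := disjoint_def.1 (hI (by simp +decide : i + 1 ≠ i + 2)) a
      (haI _ (by simp)) (haI _ (by simp +decide))
    simpa [h0] using ha i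
  · refine fun hv => ⟨0, fun j => ?_⟩
    obtain rfl | hj := eq_or_ne j i <;> simp [*]

theorem ker_reflectionMap (hI : Pairwise (Function.onFun Disjoint I)) (i : ZMod 3) :
    LinearMap.ker (reflectionMap I i) = I i :=
  ext fun _ => reflectionMap_eq_zero_iff hI

theorem eq_of_reflectionMap_eq (hI : Pairwise (Function.onFun Disjoint I)) {v w : V}
    (h : ∀ i, reflectionMap I i v = reflectionMap I i w) : v = w := by
  have hmem : ∀ i, v - w ∈ I i := fun i => by
    rw [← reflectionMap_eq_zero_iff hI, map_sub, h i, sub_self]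
  exact sub_eq_zero.1 (disjoint_def.1 (hI (by decide : (0 : ZMod 3) ≠ 1)) _ (hmem 0) (hmem 1))

theorem finrank_reflectionSpace [FiniteDimensional k V]
    (hI : Pairwise (Function.onFun Disjoint I)) :
    finrank k (reflectionSpace I) + ∑ i, finrank k (I i) = 2 * finrank k V := by
  have hinj : Function.Injective (LinearMap.pi fun i => (I i).mkQ) := by
    rw [← LinearMap.ker_eq_bot, LinearMap.ker_pi]
    simp only [ker_mkQ]
    exact eq_bot_iff.2 ((hI (by decide : (0 : ZMod 3) ≠ 1)).le_bot.trans'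
      (le_inf (iInf_le _ _) (iInf_le _ _)))
  have hquot : finrank k (reflectionSpace I) + _ = _ :=
    (LinearMap.range (LinearMap.pi fun i => (I i).mkQ)).finrank_quotient_add_finrank
  have hsum := Finset.sum_congr rfl fun i (_ : i ∈ Finset.univ) =>
    (I i).finrank_quotient_add_finrank
  simp only [LinearMap.finrank_range_of_inj hinj, finrank_pi_fintype, Finset.sum_add_distrib,
    Finset.sum_const, Finset.card_univ, ZMod.card, smul_eq_mul] at hquot hsum
  omega

/-- The isotropic slots of the reflection of a sextuple, whose coisotropic slots are the ranges of
the structure maps. -/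
def reflectionI (I C : ZMod 3 → Submodule k V) (i : ZMod 3) : Submodule k (reflectionSpace I) :=
  (C i).map (reflectionMap I i)

/-- The coisotropic slots of the reflection of a sextuple. -/
def reflectionC (I : ZMod 3 → Submodule k V) (i : ZMod 3) : Submodule k (reflectionSpace I) :=
  LinearMap.range (reflectionMap I i)

theorem exists_lift_reflection (hI : Pairwise (Function.onFun Disjoint I)) (hIC : ∀ i, I i ≤ C i)
    {π : End k (reflectionSpace I)} (hπ : π ∈ sextupleEnd (reflectionI I C) (reflectionC I)) :
    ∃ p ∈ sextupleEnd I C, ∀ i v, reflectionMap I i (p v) = π (reflectionMap I i v) := by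
  rw [mem_sextupleEnd] at hπ
  have hlift (v : V) : ∃ w, ∀ i, reflectionMap I i w = π (reflectionMap I i v) := by
    choose q hq using fun i => hπ.2 i _ (LinearMap.mem_range_self _ v)
    obtain ⟨w, hw⟩ := sum_reflectionMap_eq_zero_iff.1
      (show ∑ i, reflectionMap I i (q i) = 0 by
        simp only [hq, ← map_sum, sum_reflectionMap, map_zero])
    refine ⟨w, fun i => ?_⟩
    rw [← hq, eq_comm, ← sub_eq_zero, ← map_sub, reflectionMap_eq_zero_iff hI]
    exact hw i
  choose p hp using hlift
  refine ⟨{ toFun := p, map_add' := fun v w => ?_, map_smul' := fun c v => ?_ },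
    mem_sextupleEnd.2 ⟨fun i v hv => ?_, fun i v hv => ?_⟩, fun i v => hp v i⟩
  · exact eq_of_reflectionMap_eq hI fun i => by simp only [map_add, hp]
  · exact eq_of_reflectionMap_eq hI fun i => by simp only [map_smul, hp, RingHom.id_apply]
  · have h0 := hp v i
    rwa [(reflectionMap_eq_zero_iff hI).2 hv, map_zero, reflectionMap_eq_zero_iff hI] at h0
  · obtain ⟨c, hc, hcv⟩ := hπ.1 i _ (mem_map_of_mem (f := reflectionMap I i) hv)
    rw [← hp, eq_comm, ← sub_eq_zero, ← map_sub, reflectionMap_eq_zero_iff hI] at hcv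
    simpa using (C i).add_mem (hIC i hcv) hc

theorem IndecSextuple.reflection [FiniteDimensional k V] (h : IndecSextuple I C)
    (hI : Pairwise (Function.onFun Disjoint I)) :
    IndecSextuple (reflectionI I C) (reflectionC I) where
  toIsIndecomposable := by
    have := h.nontrivial
    have : Nontrivial (reflectionSpace I) := by
      by_contra hn
      rw [not_nontrivial_iff_subsingleton] at hn
      obtain ⟨x, hx⟩ := exists_ne (0 : V)
      exact hx (eq_of_reflectionMap_eq hI fun i => Subsingleton.elim _ _)
    refine isIndecomposable_of_isIdempotentElem fun π hπ hidem => ?_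
    obtain ⟨p, hp, hpπ⟩ := exists_lift_reflection hI h.le hπ
    have hpidem : IsIdempotentElem p := LinearMap.ext fun v =>
      eq_of_reflectionMap_eq hI fun i => by
        rw [End.mul_apply, hpπ, hpπ, ← End.mul_apply, hidem.eq]
    refine (h.eq_zero_or_eq_one hp hpidem).imp ?_ ?_ <;> rintro rfl <;>
      exact reflectionSpace_hom_ext fun i v => by simp [← hpπ]
  le _ := LinearMap.map_le_range

theorem HasDefectZero.reflection [FiniteDimensional k V] (hd : HasDefectZero I C)
    (hIC : ∀ i, I i ≤ C i) (hI : Pairwise (Function.onFun Disjoint I)) :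
    HasDefectZero (reflectionI I C) (reflectionC I) := by
  have finrank_reflectionI (i : ZMod 3) :
      finrank k (reflectionI I C i) + finrank k (I i) = finrank k (C i) := by
    have hrank := ((reflectionMap I i).domRestrict (C i)).finrank_range_add_finrank_ker
    rw [LinearMap.range_domRestrict, LinearMap.ker_domRestrict, ker_reflectionMap hI] at hrank
    rw [← hrank, (comapSubtypeEquivOfLe (hIC i)).finrank_eq, reflectionI]
  have finrank_reflectionC (i : ZMod 3) :
      finrank k (reflectionC I i) + finrank k (I i) = finrank k V := by
    rw [← (reflectionMap I i).finrank_range_add_finrank_ker, ker_reflectionMap hI, reflectionC]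
  have hsumI := Finset.sum_congr rfl fun i (_ : i ∈ Finset.univ) => finrank_reflectionI i
  have hsumC := Finset.sum_congr rfl fun i (_ : i ∈ Finset.univ) => finrank_reflectionC i
  have hV := finrank_reflectionSpace hI
  simp only [HasDefectZero, Finset.sum_add_distrib, Finset.sum_const, Finset.card_univ, ZMod.card,
    smul_eq_mul] at hsumI hsumC hd ⊢
  omega

end Reflection

section Chains

universe u v

theorem sum_zmod_three {M : Type*} [AddCommMonoid M] (g : ZMod 3 → M) (i : ZMod 3) :
    ∑ j, g j = g (i - 1) + g i + g (i + 1) := by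
  calc
    ∑ j, g j = ∑ j, g (i - 1 + j) := (Equiv.sum_comp (Equiv.addLeft (i - 1)) g).symm
    _ = g (i - 1 + 0) + g (i - 1 + 1) + g (i - 1 + 2) := Fin.sum_univ_three _
    _ = g (i - 1) + g i + g (i + 1) := by
      rw [show i + 1 = i - 1 + 2 by ring, add_zero, sub_add_cancel]

theorem zmod_three_sub_one_sub_one (a : ZMod 3) : a - 1 - 1 = a + 1 := by decide +revert

theorem zmod_three_add_one_add_one (a : ZMod 3) : a + 1 + 1 = a - 1 := by decide +revert

theorem forall_zmod_three {p : ZMod 3 → Prop} : (∀ j, p j) ↔ p 0 ∧ p 1 ∧ p 2 :=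
  ⟨fun h => ⟨h 0, h 1, h 2⟩, fun ⟨h0, h1, h2⟩ j => by fin_cases j <;> assumption⟩

theorem zmod_three_trichotomy (a b : ZMod 3) : a = b ∨ a = b + 1 ∨ a = b - 1 := by
  decide +revert

variable {k : Type u} {V : Type v} [Field k] [AddCommGroup V] [Module k V]
  {I C : ZMod 3 → Submodule k V} {n : ℕ} {x : ℕ → V}

/-- A chain `0 = x 0, x 1, …, x n` of elements of the cyclically repeated isotropic slots, any two
consecutive ones being congruent modulo the coisotropic slot with the third index. -/
structure OpenChain (I C : ZMod 3 → Submodule k V) (n : ℕ) (x : ℕ → V) : Prop where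
  zero : x 0 = 0
  mem_I : ∀ i ≤ n, x i ∈ I i
  sub_mem_C : ∀ i < n, x i - x (i + 1) ∈ C (i - 1)

/-- A chain which can be continued by zeros. -/
structure ClosedChain (I C : ZMod 3 → Submodule k V) (n : ℕ) (x : ℕ → V) : Prop
    extends OpenChain I C n x where
  last_mem_C : x n ∈ C (n - 1)

/-- The notion dual to a chain: the elements are those of a chain of linear forms, and the pairing
of the two is upper triangular. -/
structure DualChain (I C : ZMod 3 → Submodule k V) (n : ℕ) (y : ℕ → V) : Prop where
  zero_mem_C : y 0 ∈ C (-1)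
  mem_C : ∀ i ≤ n, y i ∈ C i
  add_mem_I : ∀ i < n, y i + y (i + 1) ∈ I i
  last_mem_I : y n ∈ I n

/-- The kind of dual chain to which closed chains are sent by the reflection, and conversely. -/
structure ClosedDualChain (I C : ZMod 3 → Submodule k V) (n : ℕ) (y : ℕ → V) : Prop
    extends DualChain I C n y where
  zero_mem_I : y 0 ∈ I (-1)

theorem reflectionMap_sub_one_add (i : ZMod 3) (v : V) :
    reflectionMap I (i - 1) v + reflectionMap I i v + reflectionMap I (i + 1) v = 0 := by
  rw [← sum_zmod_three fun j => reflectionMap I j v, sum_reflectionMap]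

theorem ClosedChain.reflection (hI : Pairwise (Function.onFun Disjoint I))
    (h : ClosedChain I C (n + 1) x) :
    ClosedDualChain (reflectionI I C) (reflectionC I) n
      fun i => reflectionMap I i (x (i + 1)) := by
  have eq_neg (i : ℕ) (hi : i ≤ n) :
      reflectionMap I i (x (i + 1)) = -reflectionMap I (i - 1) (x (i + 1)) := by
    have hmem : x (i + 1) ∈ I (i + 1) := mod_cast h.mem_I (i + 1) (by omega)
    have hsum := reflectionMap_sub_one_add (I := I) i (x (i + 1))
    rw [(reflectionMap_eq_zero_iff hI).2 hmem, add_zero] at hsum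
    exact eq_neg_of_add_eq_zero_right hsum
  have zero_mem : reflectionMap I ((0 : ℕ) : ZMod 3) (x (0 + 1)) ∈ reflectionI I C (-1) := by
    have h0 := h.sub_mem_C 0 n.succ_pos
    rw [eq_neg 0 n.zero_le, ← map_neg, Nat.cast_zero, zero_sub]
    exact mem_map_of_mem (by simpa [h.zero] using h0)
  refine ⟨⟨LinearMap.map_le_range zero_mem, fun i _ => LinearMap.mem_range_self _ _,
    fun i hi => ?_, ?_⟩, zero_mem⟩
  · have hC := h.sub_mem_C (i + 1) (by omega)
    rw [eq_neg (i + 1) hi, Nat.cast_succ, add_sub_cancel_right, ← sub_eq_add_neg, ← map_sub]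
    exact mem_map_of_mem (by simpa using hC)
  · exact mem_map_of_mem (by simpa using h.last_mem_C)

theorem ClosedDualChain.reflection {y : ℕ → V} (hI : Pairwise (Function.onFun Disjoint I))
    (h : ClosedDualChain I C n y) :
    ClosedChain (reflectionI I C ∘ Equiv.subRight 1) (reflectionC I ∘ Equiv.subRight 1) n
      fun i => -reflectionMap I (i - 1) (y i) := by
  have succ_eq (i : ℕ) (hi : i < n) :
      -reflectionMap I (i : ZMod 3) (y (i + 1)) = reflectionMap I i (y i) := by
    have hmem := (reflectionMap_eq_zero_iff hI).2 (h.add_mem_I i hi)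
    rw [map_add] at hmem
    exact (eq_neg_of_add_eq_zero_left hmem).symm
  refine ⟨⟨?_, fun i hi => ?_, fun i hi => ?_⟩, ?_⟩
  · simpa [reflectionMap_eq_zero_iff hI] using h.zero_mem_I
  · obtain _ | i := i
    · simp [(reflectionMap_eq_zero_iff hI).2 h.zero_mem_I]
    · simp only [Nat.cast_succ, add_sub_cancel_right, Function.comp_apply, Equiv.subRight_apply]
      rw [succ_eq i hi]
      exact mem_map_of_mem (h.mem_C i (by omega))
  · refine ⟨y i, ?_⟩
    simp only [Nat.cast_succ, add_sub_cancel_right, Equiv.subRight_apply,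
      zmod_three_sub_one_sub_one]
    rw [succ_eq i hi, ← sub_eq_zero, ← reflectionMap_sub_one_add (I := I) i (y i)]
    abel
  · refine ⟨y n, ?_⟩
    have hn := (reflectionMap_eq_zero_iff hI).2 h.last_mem_I
    have hsum := reflectionMap_sub_one_add (I := I) n (y n)
    rw [hn, add_zero] at hsum
    simp only [Equiv.subRight_apply, zmod_three_sub_one_sub_one]
    exact eq_neg_of_add_eq_zero_right hsum

theorem ClosedChain.eq_zero [FiniteDimensional k V] (h : IndecSextuple I C)
    (hd : HasDefectZero I C) (hx : ClosedChain I C n x) : ∀ i ≤ n, x i = 0 := by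
  induction n generalizing V with
  | zero => exact fun i hi => Nat.le_zero.1 hi ▸ hx.zero
  | succ n ih =>
    have hI : Pairwise (Function.onFun Disjoint I) := fun _ _ => h.disjoint_isotropic hd
    have h' := h.reflection hI
    have hd' := hd.reflection h.le hI
    have hI' : Pairwise (Function.onFun Disjoint (reflectionI I C)) :=
      fun _ _ => h'.disjoint_isotropic hd'
    have hy := hx.reflection hI
    have hw := ih ((h'.reflection hI').comp_equiv _) ((hd'.reflection h'.le hI').comp_equiv _)
      (hy.reflection hI')
    have mem_sub_one (i : ℕ) (hi : i ≤ n) :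
        reflectionMap I i (x (i + 1)) ∈ reflectionI I C (i - 1) :=
      (reflectionMap_eq_zero_iff hI').1 (neg_eq_zero.1 (hw i hi))
    have mem (i : ℕ) (hi : i ≤ n) : reflectionMap I i (x (i + 1)) ∈ reflectionI I C i := by
      obtain rfl | hlt := hi.eq_or_lt
      · exact hy.last_mem_I
      · have hsucc := mem_sub_one (i + 1) hlt
        rw [Nat.cast_succ, add_sub_cancel_right] at hsucc
        exact (Submodule.add_mem_iff_left _ hsucc).1 (mod_cast hy.add_mem_I i hlt)
    rintro (_ | i) hi
    · exact hx.zero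
    have hi : i ≤ n := by omega
    have hmap := disjoint_def.1 (hI' (by simp : (i : ZMod 3) - 1 ≠ i)) _ (mem_sub_one i hi)
      (mem i hi)
    exact disjoint_def.1 (hI (by simp : (i : ZMod 3) ≠ i + 1)) _
      ((reflectionMap_eq_zero_iff hI).1 hmap) (mod_cast hx.mem_I (i + 1) (by omega))

end Chains

section SelfDuality

variable {k V : Type*} [Field k] [AddCommGroup V] [Module k V]
  {I C : ZMod 3 → Submodule k V} {B : LinearMap.BilinForm k V} {n : ℕ} {x y : ℕ → V}

/-- An isomorphism of a sextuple with its dual, written as a nondegenerate bilinear form. -/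
structure IsSelfDuality (B : LinearMap.BilinForm k V) (I C : ZMod 3 → Submodule k V) : Prop where
  nondegenerate : B.Nondegenerate
  mem_I_iff : ∀ {j x}, x ∈ I j ↔ ∀ y ∈ C j, B x y = 0
  mem_C_iff : ∀ {j x}, x ∈ C j ↔ ∀ y ∈ I j, B x y = 0

namespace IsSelfDuality

theorem comp_equiv (hB : IsSelfDuality B I C) (e : ZMod 3 ≃ ZMod 3) :
    IsSelfDuality B (I ∘ e) (C ∘ e) where
  nondegenerate := hB.nondegenerate
  mem_I_iff := hB.mem_I_iff
  mem_C_iff := hB.mem_C_iff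

theorem apply_I_C (hB : IsSelfDuality B I C) {j : ZMod 3} {x y : V} (hx : x ∈ I j) (hy : y ∈ C j) :
    B x y = 0 :=
  hB.mem_I_iff.1 hx y hy

theorem apply_C_I (hB : IsSelfDuality B I C) {j : ZMod 3} {x y : V} (hx : x ∈ C j) (hy : y ∈ I j) :
    B x y = 0 :=
  hB.mem_C_iff.1 hx y hy

theorem exists_apply_ne_zero [FiniteDimensional k V] (hB : IsSelfDuality B I C) {i j : ZMod 3}
    {x : V} (hx : x ∉ C i ⊔ I j) : ∃ s ∈ I i, s ∈ C j ∧ B s x ≠ 0 := by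
  obtain ⟨φ, hφx, hφ⟩ := exists_le_ker_of_notMem hx
  obtain ⟨s, rfl⟩ := (B.toDual hB.nondegenerate).surjective φ
  exact ⟨s, hB.mem_I_iff.2 fun y hy => hφ (mem_sup_left hy),
    hB.mem_C_iff.2 fun y hy => hφ (mem_sup_right hy), hφx⟩

end IsSelfDuality

section Pairing

theorem not_isNilpotent_of_comp_eq_smul {f : End k V} {φ : Dual k V} {c : k} (hc : c ≠ 0)
    (hφ : φ ≠ 0) (hf : ∀ v, φ (f v) = c * φ v) : ¬ IsNilpotent f := by
  rintro ⟨m, hm⟩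
  have hpow (n : ℕ) (v : V) : φ ((f ^ n) v) = c ^ n * φ v := by
    induction n with
    | zero => simp
    | succ n ih => rw [pow_succ', End.mul_apply, hf, ih, pow_succ', mul_assoc]
  exact hφ (LinearMap.ext fun v => by simpa [hm, hc] using hpow m v)

theorem sum_range_mem_of_zmod_three {M : Type*} [AddCommMonoid M] {P : AddSubmonoid M} {g : ℕ → M}
    {r : ZMod 3} (zero_mem : r = -1 → g 0 ∈ P) (mem : ∀ i ≤ n, r = i + 1 → g i ∈ P)
    (add_mem : ∀ i < n, r = i → g i + g (i + 1) ∈ P) (last_mem : r = n → g n ∈ P) :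
    ∑ i ∈ Finset.range (n + 1), g i ∈ P := by
  have key (m : ℕ) (hm : m ≤ n) :
      (r = m → ∑ i ∈ Finset.range m, g i ∈ P) ∧
        (r ≠ m → ∑ i ∈ Finset.range (m + 1), g i ∈ P) := by
    induction m with
    | zero =>
      refine ⟨fun _ => by simp, fun hr => ?_⟩
      rw [Finset.sum_range_one]
      rcases zmod_three_trichotomy r 0 with h | h | h
      exacts [(hr (by simpa using h)).elim, mem 0 hm (by simpa using h),
        zero_mem (by simpa using h)]
    | succ m ih =>
      obtain ⟨ih_eq, ih_ne⟩ := ih (by omega)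
      rw [Nat.cast_succ]
      refine ⟨fun hr => ih_ne (by simp [hr]), fun hr => ?_⟩
      rcases zmod_three_trichotomy r m with h | h | h
      · rw [Finset.sum_range_succ, Finset.sum_range_succ, add_assoc]
        exact P.add_mem (ih_eq h) (add_mem m hm h)
      · exact (hr h).elim
      · rw [Finset.sum_range_succ]
        refine P.add_mem (ih_ne (by simp [h])) (mem _ hm ?_)
        rw [h, Nat.cast_succ, zmod_three_add_one_add_one]
  by_cases hr : r = n
  · rw [Finset.sum_range_succ]
    exact P.add_mem ((key n le_rfl).1 hr) (last_mem hr)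
  · exact (key n le_rfl).2 hr

theorem DualChain.mem_C_sub_one (h : DualChain I C n y) (hIC : ∀ j, I j ≤ C j) {i : ℕ}
    (hi : i ≤ n) : y i ∈ C (i - 1) := by
  obtain _ | i := i
  · simpa using h.zero_mem_C
  · rw [Nat.cast_succ, add_sub_cancel_right]
    exact (Submodule.add_mem_iff_right _ (h.mem_C i (by omega))).1 (hIC _ (h.add_mem_I i hi))

/-- The endomorphism `v ↦ ∑ i ≤ n, B (y i) v • x (i + 1)`, which respects the sextuple when `x` is
a chain and `y` a dual chain. -/
def chainEnd (B : LinearMap.BilinForm k V) (n : ℕ) (x y : ℕ → V) : End k V :=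
  ∑ i ∈ Finset.range (n + 1), (B (y i)).smulRight (x (i + 1))

theorem chainEnd_apply (v : V) :
    chainEnd B n x y v = ∑ i ∈ Finset.range (n + 1), B (y i) v • x (i + 1) := by
  simp [chainEnd]

theorem chainEnd_mem_sextupleEnd (hB : IsSelfDuality B I C) (hIC : ∀ j, I j ≤ C j)
    (hx : OpenChain I C (n + 1) x) (hy : DualChain I C n y) :
    chainEnd B n x y ∈ sextupleEnd I C := by
  have mem_I (i : ℕ) (hi : i ≤ n) : x (i + 1) ∈ I (i + 1) := mod_cast hx.mem_I (i + 1) (by omega)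
  refine mem_sextupleEnd.2 ⟨fun j v hv => ?_, fun j v hv => ?_⟩ <;> rw [chainEnd_apply]
  · refine sum_mem fun i hi => ?_
    have hi : i ≤ n := Nat.lt_succ_iff.1 (Finset.mem_range.1 hi)
    rcases zmod_three_trichotomy j i with rfl | rfl | rfl
    · simp [hB.apply_C_I (hy.mem_C i hi) hv]
    · exact (I _).smul_mem _ (mem_I i hi)
    · simp [hB.apply_C_I (hy.mem_C_sub_one hIC hi) hv]
  · refine sum_range_mem_of_zmod_three (P := (C j).toAddSubmonoid) (r := j) ?_ ?_ ?_ ?_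
    · rintro rfl
      exact (C _).smul_mem _ (by simpa [hx.zero] using hx.sub_mem_C 0 n.succ_pos)
    · rintro i hi rfl
      exact (C _).smul_mem _ (hIC _ (mem_I i hi))
    · rintro i hi rfl
      have hneg : B (y (i + 1)) v = -B (y i) v := by
        rw [eq_neg_iff_add_eq_zero, add_comm, ← LinearMap.add_apply, ← map_add]
        exact hB.apply_I_C (hy.add_mem_I i hi) hv
      rw [hneg, neg_smul, ← sub_eq_add_neg, ← smul_sub]
      exact (C _).smul_mem _ (by simpa using hx.sub_mem_C (i + 1) (by omega))
    · rintro rfl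
      simp [hB.apply_I_C hy.last_mem_I hv]

theorem DualChain.apply_eq_zero_of_le (hB : IsSelfDuality B I C) (hIC : ∀ j, I j ≤ C j)
    (hx : OpenChain I C (n + 1) x) (hy : DualChain I C n y) {i j : ℕ} (hji : j ≤ i) (hi : i ≤ n) :
    B (y i) (x j) = 0 := by
  have hxj := hx.mem_I j (by omega)
  rcases zmod_three_trichotomy j i with hmod | hmod | hmod
  · exact hB.apply_C_I (hy.mem_C i hi) (hmod ▸ hxj)
  · induction j generalizing i with
    | zero => simp [hx.zero]
    | succ j ih =>
      obtain ⟨l, rfl⟩ := Nat.exists_eq_add_of_le' (hji.trans' (Nat.le_add_left 1 j))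
      have hj : (j : ZMod 3) = l + 1 := by simpa using hmod
      have hj1 : (j : ZMod 3) - 1 = l := by simp [hj]
      have hj2 : ((j + 1 : ℕ) : ZMod 3) = l - 1 := by
        rw [Nat.cast_succ, hj, zmod_three_add_one_add_one]
      have hdiag := ih (i := l) (by omega) (by omega) (hx.mem_I j (by omega)) hj
      have hpair := hB.apply_I_C (hy.add_mem_I l (by omega)) (hj1 ▸ hx.sub_mem_C j (by omega))
      have hl : B (y l) (x (j + 1)) = 0 :=
        hB.apply_C_I (hy.mem_C_sub_one hIC (by omega)) (hj2 ▸ hxj)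
      have hsucc : B (y (l + 1)) (x j) = 0 :=
        hB.apply_C_I (hy.mem_C (l + 1) hi) (by simpa [← hj] using hx.mem_I j (by omega))
      simpa [hdiag, hl, hsucc] using hpair
  · exact hB.apply_C_I (hy.mem_C_sub_one hIC hi) (hmod ▸ hxj)

theorem DualChain.apply_last_eq_zero (hB : IsSelfDuality B I C) (hIC : ∀ j, I j ≤ C j)
    (hy : DualChain I C n y) {i : ℕ} (hi : i ≤ n) : B (y i) (y n) = 0 := by
  rcases zmod_three_trichotomy i n with hmod | hmod | hmod
  · exact hB.apply_C_I (hy.mem_C i hi) (hmod ▸ hy.last_mem_I)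
  · exact hB.apply_C_I (hy.mem_C_sub_one hIC hi) (by simpa [hmod] using hy.last_mem_I)
  · have hlt : i < n := hi.lt_of_ne fun h => by simpa [h] using hmod.symm
    have hsucc : B (y (i + 1)) (y n) = 0 :=
      hB.apply_C_I (hy.mem_C _ hlt) (by simpa [hmod] using hy.last_mem_I)
    have hpair := hB.apply_I_C (hy.add_mem_I i hlt) (hmod ▸ hy.mem_C_sub_one hIC le_rfl)
    simpa [hsucc] using hpair

theorem DualChain.apply_eq_zero [FiniteDimensional k V] (h : IndecSextuple I C)
    (hB : IsSelfDuality B I C) (hx : OpenChain I C (n + 1) x) (hy : DualChain I C n y) :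
    B (y n) (x (n + 1)) = 0 := by
  by_contra hc
  have hφ : B (y n) ≠ 0 := by
    intro h0
    simp [h0] at hc
  have heigen (v : V) : B (y n) (chainEnd B n x y v) = B (y n) (x (n + 1)) * B (y n) v := by
    rw [chainEnd_apply, map_sum, Finset.sum_range_succ, Finset.sum_eq_zero, zero_add, map_smul,
      smul_eq_mul, mul_comm]
    intro i hi
    rw [map_smul, DualChain.apply_eq_zero_of_le hB h.le hx hy (Finset.mem_range.1 hi) le_rfl,
      smul_zero]
  have hker : chainEnd B n x y (y n) = 0 := by
    rw [chainEnd_apply]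
    refine Finset.sum_eq_zero fun i hi => ?_
    rw [hy.apply_last_eq_zero hB h.le (Nat.lt_succ_iff.1 (Finset.mem_range.1 hi)), zero_smul]
  rcases h.isNilpotent_or_bijective (chainEnd_mem_sextupleEnd hB h.le hx hy) with hnil | hbij
  · exact not_isNilpotent_of_comp_eq_smul hc hφ heigen hnil
  · exact hφ (by rw [hbij.1 (hker.trans (map_zero _).symm), map_zero])

end Pairing

section Prolongation

theorem OpenChain.update_succ (hx : OpenChain I C n x) {z : V} (hz : z ∈ I (n + 1))
    (hC : x n - z ∈ C (n - 1)) : OpenChain I C (n + 1) (Function.update x (n + 1) z) := by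
  have update_eq (i : ℕ) (hi : i ≤ n) : Function.update x (n + 1) z i = x i :=
    Function.update_of_ne (by omega) _ _
  refine ⟨(update_eq 0 n.zero_le).trans hx.zero, fun i hi => ?_, fun i hi => ?_⟩
  · obtain rfl | hlt := hi.eq_or_lt
    · simpa using hz
    · rw [update_eq i (by omega)]
      exact hx.mem_I i (by omega)
  · rw [update_eq i (by omega)]
    obtain rfl | hlt := (Nat.lt_succ_iff.1 hi).eq_or_lt
    · rwa [Function.update_self]
    · rw [update_eq (i + 1) hlt]
      exact hx.sub_mem_C i hlt

/-- The alternating partial sums `t l - t (l - 1) + ⋯` of a chain `t`. -/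
def alternatingSum (t : ℕ → V) : ℕ → V
  | 0 => 0
  | l + 1 => t (l + 1) - alternatingSum t l

theorem OpenChain.alternatingSum_mem_C (hIC : ∀ j, I j ≤ C j) (hx : OpenChain I C n x) :
    ∀ l ≤ n, alternatingSum x l ∈ C l ∧ alternatingSum x l ∈ C (l + 1)
  | 0, _ => by simp [alternatingSum]
  | 1, hn => by
    have hC := hx.sub_mem_C 0 hn
    rw [hx.zero] at hC
    refine ⟨by simpa [alternatingSum] using hIC _ (hx.mem_I 1 hn), ?_⟩
    rw [Nat.cast_one, show (1 : ZMod 3) + 1 = 0 - 1 by rfl]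
    simpa [alternatingSum] using hC
  | l + 2, hn => by
    have hl := (hx.alternatingSum_mem_C hIC l (by omega)).1
    have hsucc := (hx.alternatingSum_mem_C hIC (l + 1) (by omega)).2
    refine ⟨sub_mem (hIC _ (hx.mem_I (l + 2) hn)) (mod_cast hsucc), ?_⟩
    have hC := hx.sub_mem_C (l + 1) (by omega)
    have heq : alternatingSum x (l + 2) =
        alternatingSum x l - (x (l + 1) - x (l + 2)) := by
      simp only [alternatingSum]
      abel
    have hcast : ((l + 2 : ℕ) : ZMod 3) + 1 = l := by
      rw [Nat.cast_succ, Nat.cast_succ, zmod_three_add_one_add_one, add_sub_cancel_right]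
    rw [heq, hcast]
    exact sub_mem hl (by simpa using hC)

theorem OpenChain.dualChain {t : ℕ → V} (hIC : ∀ j, I j ≤ C j)
    (ht : OpenChain (I ∘ Equiv.subLeft ((n + 1 : ℕ) : ZMod 3))
      (C ∘ Equiv.subLeft ((n + 1 : ℕ) : ZMod 3)) (n + 1) t) :
    DualChain I C n fun i => alternatingSum t (n + 1 - i) := by
  have cast_sub (i : ℕ) (hi : i ≤ n + 1) :
      ((n + 1 : ℕ) : ZMod 3) - (n + 1 - i : ℕ) = i := by
    rw [Nat.cast_sub hi, sub_sub_cancel]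
  have mem_C := ht.alternatingSum_mem_C fun j => hIC _
  refine ⟨?_, fun i hi => ?_, fun i hi => ?_, ?_⟩
  · simpa using (mem_C (n + 1) le_rfl).2
  · simpa only [Function.comp_apply, Equiv.subLeft_apply, cast_sub i (by omega)] using
      (mem_C (n + 1 - i) (by omega)).1
  · have hI := ht.mem_I (n + 1 - i) (by omega)
    rw [Function.comp_apply, Equiv.subLeft_apply, cast_sub i (by omega)] at hI
    rw [show n + 1 - i = n - i + 1 by omega, show n + 1 - (i + 1) = n - i by omega]
    rw [show n + 1 - i = n - i + 1 by omega] at hI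
    simpa [alternatingSum] using hI
  · simpa [alternatingSum] using ht.mem_I 1 (by omega)

theorem IndecSextuple.last_mem_sup [FiniteDimensional k V] (h : IndecSextuple I C)
    (hB : IsSelfDuality B I C) (hx : OpenChain I C n x) : x n ∈ C (n - 1) ⊔ I (n + 1) := by
  induction n using Nat.strong_induction_on generalizing I C x with
  | _ n ih =>
  by_contra hnot
  obtain ⟨s, hsI, hsC, hs⟩ := hB.exists_apply_ne_zero hnot
  obtain _ | n := n
  · simp [hx.zero] at hs
  set e := Equiv.subLeft ((n + 1 : ℕ) : ZMod 3)
  have exists_chain (m : ℕ) (hm : m ≤ n) :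
      ∃ t, OpenChain (I ∘ e) (C ∘ e) (m + 1) t ∧ t 1 = s := by
    induction m with
    | zero =>
      refine ⟨Pi.single 1 s, ⟨by simp, fun i hi => ?_, fun i hi => ?_⟩, by simp⟩
      · obtain rfl | rfl : i = 0 ∨ i = 1 := by omega
        · simp
        · simpa [e] using hsI
      · obtain rfl : i = 0 := by omega
        simpa [e] using hsC
    | succ m ihm =>
      obtain ⟨t, ht, ht1⟩ := ihm (by omega)
      obtain ⟨c, hc, z, hz, hcz⟩ :=
        mem_sup.1 (ih (m + 1) (by omega) (h.comp_equiv e) (hB.comp_equiv e) ht)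
      refine ⟨_, ht.update_succ hz ?_, by simpa using ht1⟩
      rwa [← hcz, add_sub_cancel_right]
  obtain ⟨t, ht, rfl⟩ := exists_chain n le_rfl
  refine hs ?_
  simpa [alternatingSum] using DualChain.apply_eq_zero h hB hx (ht.dualChain h.le)

end Prolongation

end SelfDuality

section Transversality

variable {k V : Type*} [Field k] [AddCommGroup V] [Module k V]
  {I C : ZMod 3 → Submodule k V} {B : LinearMap.BilinForm k V}

/-- The subspace of the last elements of chains of length `n`. -/
def chainSpace (I C : ZMod 3 → Submodule k V) : ℕ → Submodule k V
  | 0 => ⊥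
  | n + 1 => I (n + 1) ⊓ (chainSpace I C n ⊔ C (n - 1))

theorem exists_openChain_of_mem_chainSpace {n : ℕ} {v : V} (hv : v ∈ chainSpace I C n) :
    ∃ x, OpenChain I C n x ∧ x n = v := by
  induction n generalizing v with
  | zero => exact ⟨0, ⟨rfl, fun _ _ => zero_mem _, fun i hi => absurd hi i.not_lt_zero⟩, hv.symm⟩
  | succ n ih =>
    obtain ⟨hvI, hv⟩ := hv
    obtain ⟨a, ha, c, hc, rfl⟩ := mem_sup.1 hv
    obtain ⟨x, hx, rfl⟩ := ih ha
    exact ⟨_, hx.update_succ hvI (by simpa using hc), Function.update_self ..⟩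

variable [FiniteDimensional k V]

theorem IsSelfDuality.finrank_add_finrank (hB : IsSelfDuality B I C) (j : ZMod 3) :
    finrank k (I j) + finrank k (C j) = finrank k V := by
  have hC : LinearMap.BilinForm.orthogonal B.flip (I j) = C j := by
    ext x
    exact hB.mem_C_iff.symm
  rw [← hC, LinearMap.BilinForm.finrank_orthogonal hB.nondegenerate.flip,
    Nat.add_sub_cancel' (finrank_le _)]

theorem IsSelfDuality.hasDefectZero (hB : IsSelfDuality B I C) : HasDefectZero I C := by
  simp only [HasDefectZero, hB.finrank_add_finrank]
  simp [ZMod.card]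

namespace IndecSextuple

theorem finrank_chainSpace_succ (h : IndecSextuple I C) (hB : IsSelfDuality B I C) (n : ℕ) :
    finrank k (chainSpace I C (n + 1)) =
      finrank k (chainSpace I C n) + finrank k ↥(I (n + 1) ⊓ C (n - 1)) := by
  have hle : chainSpace I C n ≤ C (n - 1) ⊔ I (n + 1) := by
    intro v hv
    obtain ⟨x, hx, rfl⟩ := exists_openChain_of_mem_chainSpace hv
    exact h.last_mem_sup hB hx
  have hinf : chainSpace I C n ⊓ C (n - 1) = ⊥ := by
    refine eq_bot_iff.2 fun v ⟨hv, hvC⟩ => ?_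
    obtain ⟨x, hx, rfl⟩ := exists_openChain_of_mem_chainSpace hv
    exact ClosedChain.eq_zero h hB.hasDefectZero ⟨hx, hvC⟩ n le_rfl
  have hsup_succ : chainSpace I C (n + 1) ⊔ C (n - 1) = chainSpace I C n ⊔ C (n - 1) := by
    rw [chainSpace, inf_comm, inf_sup_assoc_of_le _ le_sup_right, sup_comm (I _), inf_eq_left]
    exact sup_le hle le_sup_left
  have hinf_succ : chainSpace I C (n + 1) ⊓ C (n - 1) = I (n + 1) ⊓ C (n - 1) := by
    rw [chainSpace, inf_assoc, inf_eq_right.2 (le_sup_right : C (n - 1) ≤ _)]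
  have hn := finrank_sup_add_finrank_inf_eq (chainSpace I C n) (C (n - 1))
  have hn_succ := finrank_sup_add_finrank_inf_eq (chainSpace I C (n + 1)) (C (n - 1))
  rw [hinf, finrank_bot] at hn
  rw [hsup_succ, hinf_succ] at hn_succ
  omega

theorem disjoint_I_C (h : IndecSextuple I C) (hB : IsSelfDuality B I C) {i j : ZMod 3}
    (hij : i ≠ j) : Disjoint (I i) (C j) := by
  obtain ⟨e, he, he'⟩ : ∃ e : ZMod 3 ≃ ZMod 3, e 1 = i ∧ e (-1) = j := by
    rcases zmod_three_trichotomy j i with rfl | rfl | rfl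
    · exact absurd rfl hij
    · exact ⟨Equiv.addRight (i - 1), by simp,
        (neg_add_eq_sub _ _).trans (zmod_three_sub_one_sub_one i)⟩
    · exact ⟨Equiv.subLeft (i + 1), by simp, by simp [zmod_three_add_one_add_one]⟩
  have le_finrank (m : ℕ) : m * finrank k ↥(I i ⊓ C j) ≤
      finrank k (chainSpace (I ∘ e) (C ∘ e) (3 * m)) := by
    induction m with
    | zero => simp
    | succ m ih =>
      have hsucc := (h.comp_equiv e).finrank_chainSpace_succ (hB.comp_equiv e)
      have hcast : ((3 * m : ℕ) : ZMod 3) = 0 := by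
        rw [Nat.cast_mul, ZMod.natCast_self, zero_mul]
      have hinf : (I ∘ e) ((3 * m : ℕ) + 1) ⊓ (C ∘ e) ((3 * m : ℕ) - 1) = I i ⊓ C j := by
        rw [hcast, zero_add, zero_sub, Function.comp_apply, Function.comp_apply, he, he']
      rw [mul_add, mul_one, hsucc, hsucc, hsucc, hinf, add_mul, one_mul]
      omega
  have hle := (le_finrank (finrank k V + 1)).trans (finrank_le _)
  have hzero : finrank k ↥(I i ⊓ C j) = 0 := by nlinarith
  rw [disjoint_iff]
  exact finrank_eq_zero.1 hzero

theorem isCompl_I_C (h : IndecSextuple I C) (hB : IsSelfDuality B I C) {i j : ZMod 3}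
    (hij : i ≠ j) : IsCompl (I i) (C j) := by
  have hdisj := h.disjoint_I_C hB hij
  have hle := finrank_add_finrank_le_of_disjoint (h.disjoint_I_C hB hij.symm)
  have hi := hB.finrank_add_finrank i
  have hj := hB.finrank_add_finrank j
  exact (isCompl_iff_disjoint _ _ (by omega)).2 hdisj

end IndecSextuple

end Transversality

section NormalForm

variable {k V W U : Type*} [Field k] [AddCommGroup V] [Module k V] [AddCommGroup W] [Module k W]
  [AddCommGroup U] [Module k U] {I C : ZMod 3 → Submodule k V}

theorem exists_linearEquiv_sub_mem {P Q R : Submodule k V} (hP : IsCompl P R) (hQ : IsCompl Q R) :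
    ∃ e : P ≃ₗ[k] Q, ∀ x, (x - e x : V) ∈ R := by
  refine ⟨(quotientEquivOfIsCompl R P hP.symm).symm ≪≫ₗ quotientEquivOfIsCompl R Q hQ.symm,
    fun x => ?_⟩
  rw [← Submodule.Quotient.eq, LinearEquiv.trans_apply, mk_quotientEquivOfIsCompl_apply]
  rfl

/-- The coordinates `Φ` identify the sextuple `I, C` with the one in `W × W × U` determined by the
pair of maps `a : W → U`, `b : U → W`, in which the first two pairs of subspaces are coordinate
subspaces, `I 0` is the graph of `w ↦ (w, a w)` and `C 0` is the sum of `I 0` and the graph of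
`u ↦ (-b u, 0)`. -/
structure IsNormalForm (a : W →ₗ[k] U) (b : U →ₗ[k] W) (Φ : (W × W × U) ≃ₗ[k] V)
    (I C : ZMod 3 → Submodule k V) : Prop where
  mem_I_zero_iff : ∀ {x y u}, Φ (x, y, u) ∈ I 0 ↔ y = x ∧ u = a x
  mem_C_zero_iff : ∀ {x y u}, Φ (x, y, u) ∈ C 0 ↔ x + b (u - a y) = y
  mem_I_one_iff : ∀ {x y u}, Φ (x, y, u) ∈ I 1 ↔ y = 0 ∧ u = 0
  mem_C_one_iff : ∀ {x y u}, Φ (x, y, u) ∈ C 1 ↔ y = 0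
  mem_I_two_iff : ∀ {x y u}, Φ (x, y, u) ∈ I 2 ↔ x = 0 ∧ u = 0
  mem_C_two_iff : ∀ {x y u}, Φ (x, y, u) ∈ C 2 ↔ x = 0

theorem bijective_coprod_of_isCompl {P Q R S : Submodule k V} (hQS : Q ≤ S) (hPS : IsCompl P S)
    (hQR : IsCompl Q R) {p : W ≃ₗ[k] P} {q : W ≃ₗ[k] Q} :
    Function.Bijective ((P.subtype ∘ₗ p.toLinearMap).coprod
      ((Q.subtype ∘ₗ q.toLinearMap).coprod (R ⊓ S).subtype)) := by
  constructor
  · rw [injective_iff_map_eq_zero]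
    rintro ⟨x, y, u, huR, huS⟩ h
    simp only [LinearMap.coprod_apply, LinearMap.comp_apply, LinearEquiv.coe_coe,
      subtype_apply] at h
    have hx : (p x : V) = 0 := disjoint_def.1 hPS.disjoint _ (p x).2 (by
      rw [eq_neg_of_add_eq_zero_left h]
      exact S.neg_mem (S.add_mem (hQS (q y).2) huS))
    rw [hx, zero_add] at h
    have hy : (q y : V) = 0 := disjoint_def.1 hQR.disjoint _ (q y).2 (by
      rw [eq_neg_of_add_eq_zero_left h]
      exact R.neg_mem huR)
    rw [hy, zero_add] at h
    simp_all
  · intro v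
    obtain ⟨x, hx, s, hs, rfl⟩ := mem_sup.1 (hPS.sup_eq_top ▸ mem_top : v ∈ P ⊔ S)
    obtain ⟨y, hy, u, hu, rfl⟩ := mem_sup.1 (hQR.sup_eq_top ▸ mem_top : s ∈ Q ⊔ R)
    have huS : u ∈ S := (S.add_mem_iff_right (hQS hy)).1 hs
    exact ⟨(p.symm ⟨x, hx⟩, q.symm ⟨y, hy⟩, ⟨u, hu, huS⟩), by simp⟩

theorem exists_coordinates {P Q R S : Submodule k V} (hPR : P ≤ R) (hQS : Q ≤ S)
    (hPS : IsCompl P S) (hQR : IsCompl Q R) (p : W ≃ₗ[k] P) (q : W ≃ₗ[k] Q) :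
    ∃ Φ : (W × W × ↥(R ⊓ S)) ≃ₗ[k] V, (∀ x y u, Φ (x, y, u) = p x + (q y + u)) ∧
      (∀ x y u, Φ (x, y, u) ∈ P ↔ y = 0 ∧ u = 0) ∧ (∀ x y u, Φ (x, y, u) ∈ R ↔ y = 0) ∧
      (∀ x y u, Φ (x, y, u) ∈ Q ↔ x = 0 ∧ u = 0) ∧ ∀ x y u, Φ (x, y, u) ∈ S ↔ x = 0 := by
  let Φ := LinearEquiv.ofBijective _ (bijective_coprod_of_isCompl hQS hPS hQR (p := p) (q := q))
  have hΦ (x y u) : Φ (x, y, u) = p x + (q y + u) := rfl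
  have mem_R (x y u) : Φ (x, y, u) ∈ R ↔ y = 0 := by
    rw [hΦ, R.add_mem_iff_right (hPR (p x).2), R.add_mem_iff_left u.2.1]
    refine ⟨fun hy => ?_, fun hy => by simp [hy]⟩
    simpa using disjoint_def.1 hQR.disjoint _ (q y).2 hy
  have mem_S (x y u) : Φ (x, y, u) ∈ S ↔ x = 0 := by
    rw [hΦ, S.add_mem_iff_left (S.add_mem (hQS (q y).2) u.2.2)]
    refine ⟨fun hx => ?_, fun hx => by simp [hx]⟩
    simpa using disjoint_def.1 hPS.disjoint _ (p x).2 hx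
  refine ⟨Φ, hΦ, fun x y u => ⟨fun hmem => ?_, ?_⟩, mem_R, fun x y u => ⟨fun hmem => ?_, ?_⟩, mem_S⟩
  · obtain rfl := (mem_R ..).1 (hPR hmem)
    rw [hΦ, P.add_mem_iff_right (p x).2, map_zero, ZeroMemClass.coe_zero, zero_add] at hmem
    exact ⟨rfl, Subtype.ext (disjoint_def.1 hPS.disjoint _ hmem u.2.2)⟩
  · rintro ⟨rfl, rfl⟩
    simp [hΦ]
  · obtain rfl := (mem_S ..).1 (hQS hmem)
    rw [hΦ, map_zero, ZeroMemClass.coe_zero, zero_add, Q.add_mem_iff_right (q y).2] at hmem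
    exact ⟨rfl, Subtype.ext (disjoint_def.1 hQR.disjoint _ hmem u.2.1)⟩
  · rintro ⟨rfl, rfl⟩
    simp [hΦ]

theorem exists_isNormalForm (hIC : ∀ j, I j ≤ C j) (h : ∀ i j, i ≠ j → IsCompl (I i) (C j)) :
    ∃ (a : I 0 →ₗ[k] ↥(C 1 ⊓ C 2)) (b : ↥(C 1 ⊓ C 2) →ₗ[k] I 0)
      (Φ : (I 0 × I 0 × ↥(C 1 ⊓ C 2)) ≃ₗ[k] V), IsNormalForm a b Φ I C := by
  have h12 := h 1 2 (by decide)
  have h21 := h 2 1 (by decide)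
  have h10 := h 1 0 (by decide)
  obtain ⟨p, hp⟩ := exists_linearEquiv_sub_mem (h 0 2 (by decide)) h12
  obtain ⟨q, hq⟩ := exists_linearEquiv_sub_mem (h 0 1 (by decide)) h21
  obtain ⟨Φ, hΦ, hI₁, hC₁, hI₂, hC₂⟩ := exists_coordinates (hIC 1) (hIC 2) h12 h21 p q
  let a : I 0 →ₗ[k] ↥(C 1 ⊓ C 2) :=
    ((I 0).subtype - (I 1).subtype ∘ₗ p.toLinearMap - (I 2).subtype ∘ₗ q.toLinearMap).codRestrict _
      fun w => ⟨by
        rw [LinearMap.sub_apply, LinearMap.sub_apply, sub_right_comm]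
        exact (C 1).sub_mem (hq w) (hIC 1 (p w).2),
        (C 2).sub_mem (hp w) (hIC 2 (q w).2)⟩
  let b := p.symm.toLinearMap ∘ₗ (I 1).projectionOnto (C 0) h10 ∘ₗ (C 1 ⊓ C 2).subtype
  have ha (w : I 0) : (a w : V) = w - p w - q w := rfl
  have diagonal (w : I 0) : Φ (w, w, a w) = w := by
    rw [hΦ, ha]
    abel
  refine ⟨a, b, Φ, fun {x y u} => ⟨fun hmem => ?_, ?_⟩, fun {x y u} => ?_, hI₁ _ _ _, hC₁ _ _ _,
    hI₂ _ _ _, hC₂ _ _ _⟩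
  · obtain ⟨w, hw⟩ : ∃ w : I 0, (w : V) = Φ (x, y, u) := ⟨⟨_, hmem⟩, rfl⟩
    have heq := Φ.injective ((diagonal w).trans hw)
    simp only [Prod.mk.injEq] at heq
    obtain ⟨rfl, rfl, rfl⟩ := heq
    exact ⟨rfl, rfl⟩
  · rintro ⟨rfl, rfl⟩
    rw [diagonal]
    exact y.2
  · have hsub : Φ (x, y, u) - y = p (x - y) + (u - a y : ↥(C 1 ⊓ C 2)) := by
      rw [hΦ, map_sub, AddSubgroupClass.coe_sub, AddSubgroupClass.coe_sub, ha]
      abel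
    rw [← (C 0).sub_mem_iff_left (hIC 0 y.2), hsub, ← projectionOnto_apply_eq_zero_iff h10,
      map_add, projectionOnto_apply_left, ← p.symm.map_eq_zero_iff, map_add, p.symm_apply_apply,
      sub_add_eq_add_sub, sub_eq_zero]
    rfl

/-- In coordinates `Φ : W × W × U ≃ V`, the endomorphisms of `V` acting as `α` on both copies of `W`
and as `γ` on `U`. -/
noncomputable def diagonalEnd (Φ : (W × W × U) ≃ₗ[k] V) : End k W × End k U →ₐ[k] End k V :=
  (Φ.conjAlgEquiv k).toAlgHom.comp <| (LinearMap.prodMapAlgHom k W (W × U)).comp <|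
    (AlgHom.fst k _ _).prod (LinearMap.prodMapAlgHom k W U)

variable {Φ : (W × W × U) ≃ₗ[k] V} {α : End k W} {γ : End k U}

theorem diagonalEnd_apply (x y : W) (u : U) :
    diagonalEnd Φ (α, γ) (Φ (x, y, u)) = Φ (α x, α y, γ u) := by
  simp [diagonalEnd]

theorem diagonalEnd_injective : Function.Injective (diagonalEnd Φ) := by
  rintro ⟨α, γ⟩ ⟨α', γ'⟩ h
  have heq (x u) := Φ.injective <|
    (diagonalEnd_apply x 0 u).symm.trans <| (LinearMap.congr_fun h _).trans (diagonalEnd_apply ..)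
  simp only [Prod.mk.injEq] at heq
  exact Prod.ext (LinearMap.ext fun x => (heq x 0).1) (LinearMap.ext fun u => (heq 0 u).2.2)

theorem bijective_diagonalEnd_iff {p : End k W × End k U} :
    Function.Bijective (diagonalEnd Φ p) ↔ IsUnit p := by
  have hcoe : ⇑(diagonalEnd Φ p) = Φ ∘ Prod.map p.1 (Prod.map p.1 p.2) ∘ Φ.symm := rfl
  rw [hcoe, EquivLike.comp_bijective, EquivLike.bijective_comp, Prod.map_bijective,
    Prod.map_bijective, Prod.isUnit_iff, End.isUnit_iff, End.isUnit_iff]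
  tauto

/-- A pair of maps `a : W → U`, `b : U → W` whose endomorphism algebra, a subalgebra of
`End W × End U`, satisfies Fitting's alternative. -/
def IsFittingPair (a : W →ₗ[k] U) (b : U →ₗ[k] W) : Prop :=
  ∀ p : End k W × End k U, a ∘ₗ p.1 = p.2 ∘ₗ a → p.1 ∘ₗ b = b ∘ₗ p.2 → IsNilpotent p ∨ IsUnit p

namespace IsNormalForm

variable {a : W →ₗ[k] U} {b : U →ₗ[k] W}

theorem diagonalEnd_mem (hN : IsNormalForm a b Φ I C) (ha : a ∘ₗ α = γ ∘ₗ a)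
    (hb : α ∘ₗ b = b ∘ₗ γ) : diagonalEnd Φ (α, γ) ∈ sextupleEnd I C := by
  have ha' (x) : a (α x) = γ (a x) := LinearMap.congr_fun ha x
  have hb' (u) : α (b u) = b (γ u) := LinearMap.congr_fun hb u
  refine mem_sextupleEnd.2 ⟨forall_zmod_three.2 ⟨?_, ?_, ?_⟩, forall_zmod_three.2 ⟨?_, ?_, ?_⟩⟩ <;>
    intro z <;> obtain ⟨⟨x, y, u⟩, rfl⟩ := Φ.surjective z <;> rw [diagonalEnd_apply]
  · rw [hN.mem_I_zero_iff, hN.mem_I_zero_iff]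
    rintro ⟨rfl, rfl⟩
    exact ⟨rfl, (ha' _).symm⟩
  · rw [hN.mem_I_one_iff, hN.mem_I_one_iff]
    rintro ⟨rfl, rfl⟩
    simp
  · rw [hN.mem_I_two_iff, hN.mem_I_two_iff]
    rintro ⟨rfl, rfl⟩
    simp
  · rw [hN.mem_C_zero_iff, hN.mem_C_zero_iff, ha', ← map_sub, ← hb', ← map_add]
    exact congrArg α
  · rw [hN.mem_C_one_iff, hN.mem_C_one_iff]
    rintro rfl
    simp
  · rw [hN.mem_C_two_iff, hN.mem_C_two_iff]
    rintro rfl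
    simp

theorem isFittingPair [FiniteDimensional k V] (hN : IsNormalForm a b Φ I C)
    (h : IndecSextuple I C) : IsFittingPair a b := by
  intro p ha hb
  rw [← IsNilpotent.map_iff (diagonalEnd_injective (Φ := Φ)), ← bijective_diagonalEnd_iff (Φ := Φ)]
  exact h.isNilpotent_or_bijective (hN.diagonalEnd_mem ha hb)

end IsNormalForm

end NormalForm

section Nilpotent

open Finset in
theorem commute_sum_antidiagonal {A : Type*} [Ring A] {ν : A} {m : ℕ} (hν : ν ^ (m + 1) = 0)
    (T : A) : Commute ν (∑ p ∈ antidiagonal m, ν ^ p.1 * T * ν ^ p.2) := by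
  have hleft : ∑ p ∈ antidiagonal (m + 1), ν ^ p.1 * T * ν ^ p.2 =
      ν * ∑ p ∈ antidiagonal m, ν ^ p.1 * T * ν ^ p.2 := by
    rw [Nat.sum_antidiagonal_succ, hν, mul_zero, zero_add, mul_sum]
    simp only [pow_succ', mul_assoc]
  have hright : ∑ p ∈ antidiagonal (m + 1), ν ^ p.1 * T * ν ^ p.2 =
      (∑ p ∈ antidiagonal m, ν ^ p.1 * T * ν ^ p.2) * ν := by
    rw [Nat.sum_antidiagonal_succ', hν, zero_mul, zero_mul, zero_add, sum_mul]
    simp only [pow_succ, mul_assoc]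
  exact hleft.symm.trans hright

variable {k X : Type*} [Field k] [AddCommGroup X] [Module k X]

theorem exists_apply_ne_zero_of_involution (h2 : (2 : k) ≠ 0) {f σ : End k X} (hf : f ≠ 0)
    (hσ : σ * σ = 1) : ∃ x, f x ≠ 0 ∧ ∃ ε : k, σ x = ε • x := by
  have hσσ (z) : σ (σ z) = z := LinearMap.congr_fun hσ z
  obtain ⟨z, hz⟩ : ∃ z, f z ≠ 0 := by
    by_contra! hf0
    exact hf (LinearMap.ext hf0)
  by_cases hsum : f (z + σ z) = 0
  · refine ⟨z - σ z, fun hdiff => hz ?_, -1, by simp [hσσ]⟩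
    have hz2 : (2 : k) • f z = f (z + σ z) + f (z - σ z) := by
      rw [← map_add, ← map_smul]
      congr 1
      module
    rw [hsum, hdiff, add_zero] at hz2
    exact (smul_eq_zero.1 hz2).resolve_left h2
  · exact ⟨z + σ z, hsum, 1, by rw [map_add, hσσ, one_smul, add_comm]⟩

theorem commute_conj_of_semiconjBy {ν σ e : End k X} {δ : k} (hδ : δ * δ = 1)
    (hσν : SemiconjBy σ ν (δ • ν)) (he : Commute ν e) : Commute ν (σ * e * σ) := by
  have hνσ : ν * σ = δ • (σ * ν) := by
    rw [hσν.eq, smul_mul_assoc, smul_smul, hδ, one_smul]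
  calc ν * (σ * e * σ) = δ • (σ * (ν * e) * σ) := by
        simp only [← mul_assoc, hνσ, smul_mul_assoc]
    _ = σ * e * σ * ν := by
        simp only [he.eq, mul_assoc, hνσ, mul_smul_comm, smul_smul, hδ, one_smul]

open Finset in
theorem exists_commute_apply_eq_self {ν : End k X} {m : ℕ} (hν : ν ^ (m + 1) = 0) {x : X}
    (hx : (ν ^ m) x ≠ 0) :
    ∃ e : End k X, Commute ν e ∧ e ((ν ^ m) x) = (ν ^ m) x ∧
      ∀ z, e z ∈ (k ∙ x) ⊔ LinearMap.range ν := by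
  obtain ⟨ξ, hξ⟩ := Projective.exists_dual_eq_one k hx
  let T : End k X := ξ.smulRight x
  have hsum (z : X) : (∑ p ∈ antidiagonal m, ν ^ p.1 * T * ν ^ p.2 : End k X) z =
      ∑ p ∈ antidiagonal m, ξ ((ν ^ p.2) z) • (ν ^ p.1) x := by
    simp [T, LinearMap.sum_apply]
  refine ⟨_, commute_sum_antidiagonal hν T, ?_, fun z => ?_⟩
  · rw [hsum, sum_eq_single (m, 0)]
    · simp [hξ]
    · rintro ⟨i, j⟩ hij hne
      have hj : m + 1 ≤ j + m := by
        simp only [HasAntidiagonal.mem_antidiagonal, ne_eq, Prod.mk.injEq] at hij hne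
        omega
      rw [← End.mul_apply, ← pow_add, pow_eq_zero_of_le hj hν, LinearMap.zero_apply, map_zero,
        zero_smul]
    · simp
  · rw [hsum]
    refine sum_mem fun p _ => smul_mem _ _ ?_
    cases p.1 with
    | zero => exact mem_sup_left (mem_span_singleton_self x)
    | succ i => exact mem_sup_right ⟨(ν ^ i) x, by rw [pow_succ', End.mul_apply]⟩

/-- Writing `m + 1` for the nilpotency class of `ν`, a homogeneous vector `x` with `ν ^ m x ≠ 0`
generates `X`, because an operator commuting with `ν` and fixing `ν ^ m x` can be made homogeneous
by averaging over `σ`. -/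
theorem finrank_ker_le_one_of_isNilpotent [FiniteDimensional k X] (h2 : (2 : k) ≠ 0)
    {ν σ : End k X} (hν : IsNilpotent ν) {δ : k} (hδ : δ * δ = 1) (hσ : σ * σ = 1)
    (hσν : SemiconjBy σ ν (δ • ν))
    (H : ∀ e : End k X, Commute ν e → Commute σ e → IsNilpotent e ∨ Function.Bijective e) :
    finrank k (LinearMap.ker ν) ≤ 1 := by
  cases subsingleton_or_nontrivial X
  · simp [finrank_zero_of_subsingleton]
  obtain ⟨m, hm⟩ := Nat.exists_eq_add_one.2 (pos_nilpotencyClass_iff.2 hν)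
  obtain ⟨hm1, hm0⟩ := nilpotencyClass_eq_succ_iff.1 hm
  have hσσ (z) : σ (σ z) = z := LinearMap.congr_fun hσ z
  obtain ⟨x, hx, ε, hε⟩ := exists_apply_ne_zero_of_involution h2 hm0 hσ
  obtain ⟨e, he, hfix, hrange⟩ := exists_commute_apply_eq_self hm1 hx
  have hσx : σ ((ν ^ m) x) = (δ ^ m * ε) • (ν ^ m) x := by
    rw [← End.mul_apply, (hσν.pow_right m).eq, smul_pow, End.mul_apply, hε, map_smul,
      LinearMap.smul_apply, smul_smul, mul_comm]
  have heigen : (e + σ * e * σ) ((ν ^ m) x) = (2 : k) • (ν ^ m) x := by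
    have hconj : σ (e (σ ((ν ^ m) x))) = (ν ^ m) x := by
      rw [hσx, map_smul, hfix, ← hσx, hσσ]
    rw [LinearMap.add_apply, End.mul_apply, End.mul_apply, hfix, hconj, two_smul]
  have hcomm : Commute σ (e + σ * e * σ) := by
    rw [commute_iff_eq, mul_add, add_mul, mul_assoc (σ * e), hσ, mul_assoc σ e, ← mul_assoc σ σ, hσ,
      mul_one, one_mul, add_comm]
  have hbij : Function.Bijective (e + σ * e * σ) := by
    refine (H _ (he.add_right (commute_conj_of_semiconjBy hδ hσν he)) hcomm).resolve_left
      fun hnil => h2 (isNilpotent_iff_eq_zero.1 ?_)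
    exact (End.hasEigenvalue_of_hasEigenvector
      ⟨End.mem_eigenspace_iff.2 heigen, hx⟩).isNilpotent_of_isNilpotent hnil
  have hσ_le : (k ∙ x) ⊔ LinearMap.range ν ≤ ((k ∙ x) ⊔ LinearMap.range ν).comap σ := by
    rw [sup_le_iff, span_singleton_le_iff_mem]
    refine ⟨mem_comap.2 (hε ▸ smul_mem _ _ (mem_sup_left (mem_span_singleton_self x))), ?_⟩
    rintro _ ⟨z, rfl⟩
    exact mem_comap.2 (mem_sup_right ⟨δ • σ z, by
      rw [map_smul]
      exact (LinearMap.congr_fun hσν.eq z).symm⟩)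
  have htop : (k ∙ x) ⊔ LinearMap.range ν = ⊤ := by
    refine eq_top_iff.2 fun z _ => ?_
    obtain ⟨y, rfl⟩ := hbij.2 z
    exact add_mem (hrange y) (hσ_le (hrange (σ y)))
  have hx0 : x ≠ 0 := fun h0 => hx (by rw [h0, map_zero])
  have hle := finrank_add_le_finrank_add_finrank (k ∙ x) (LinearMap.range ν)
  rw [htop, finrank_top, ← LinearMap.finrank_range_add_finrank_ker ν,
    finrank_span_singleton hx0] at hle
  omega

end Nilpotent

section FittingPair

variable {k W U : Type*} [Field k] [AddCommGroup W] [Module k W] [AddCommGroup U] [Module k U]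

theorem finrank_ker_comp_le [FiniteDimensional k W] [FiniteDimensional k U] (a : W →ₗ[k] U)
    (b : U →ₗ[k] W) :
    finrank k (LinearMap.ker (a ∘ₗ b)) ≤
      finrank k (LinearMap.ker a) + finrank k (LinearMap.ker b) := by
  let f : LinearMap.ker (a ∘ₗ b) →ₗ[k] LinearMap.ker a := b.restrict fun _ => id
  have hker : finrank k (LinearMap.ker f) ≤ finrank k (LinearMap.ker b) := by
    rw [← finrank_map_subtype_eq]
    refine finrank_mono ?_
    rintro _ ⟨x, hx, rfl⟩
    exact congrArg Subtype.val hx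
  rw [← f.finrank_range_add_finrank_ker]
  exact add_le_add (finrank_le _) hker

theorem eq_zero_of_eq_neg (h2 : (2 : k) ≠ 0) {x : W} (hx : x = -x) : x = 0 := by
  rw [eq_neg_iff_add_eq_zero, ← two_smul k] at hx
  exact (smul_eq_zero.1 hx).resolve_left h2

theorem exists_prodMap_eq_of_commute (h2 : (2 : k) ≠ 0) {e : End k (W × U)}
    (he : Commute (LinearMap.prodMap 1 (-1)) e) :
    ∃ p : End k W × End k U, LinearMap.prodMap p.1 p.2 = e := by
  have hcomm (z) := LinearMap.congr_fun he.eq z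
  refine ⟨(LinearMap.fst k W U ∘ₗ e ∘ₗ LinearMap.inl k W U,
    LinearMap.snd k W U ∘ₗ e ∘ₗ LinearMap.inr k W U), ?_⟩
  have hw (w) : (e (w, 0)).2 = 0 := by
    have h := congrArg Prod.snd (hcomm (w, 0))
    exact eq_zero_of_eq_neg h2 (by simpa using h.symm)
  have hu (u) : (e (0, u)).1 = 0 := by
    have h := congrArg Prod.fst (hcomm (0, u))
    have hneg : (LinearMap.prodMap 1 (-1) : End k (W × U)) (0, u) = -(0, u) := by simp
    rw [End.mul_apply, End.mul_apply, hneg, map_neg] at h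
    exact eq_zero_of_eq_neg h2 h
  ext <;> simp [hw, hu]

namespace IsFittingPair

variable {a : W →ₗ[k] U} {b : U →ₗ[k] W}

theorem finrank_ker_add_finrank_ker_le_one [FiniteDimensional k W] [FiniteDimensional k U]
    (h2 : (2 : k) ≠ 0) (hab : IsFittingPair a b)
    (hnil : IsNilpotent ((b ∘ₗ a, a ∘ₗ b) : End k W × End k U)) :
    finrank k (LinearMap.ker a) + finrank k (LinearMap.ker b) ≤ 1 := by
  let ν : End k (W × U) := (b ∘ₗ LinearMap.snd k W U).prod (a ∘ₗ LinearMap.fst k W U)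
  have hν_sq : ν ^ 2 = LinearMap.prodMapAlgHom k W U (b ∘ₗ a, a ∘ₗ b) := by
    ext <;> simp [ν, pow_two]
  let ι : LinearMap.ker a × LinearMap.ker b →ₗ[k] LinearMap.ker ν :=
    ((LinearMap.ker a).subtype.prodMap (LinearMap.ker b).subtype).codRestrict _ fun z => by
      simp [ν]
  have hι : Function.Injective ι :=
    (LinearMap.injective_codRestrict_iff _).2
      (Prod.map_injective.2 ⟨subtype_injective _, subtype_injective _⟩)
  rw [← finrank_prod]
  refine (LinearMap.finrank_le_finrank_of_injective hι).trans ?_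
  refine finrank_ker_le_one_of_isNilpotent h2 (σ := LinearMap.prodMap 1 (-1)) (δ := -1)
    (.of_pow (m := 2) (hν_sq ▸ hnil.map _)) (by ring) (by ext <;> simp) (by
      rw [SemiconjBy]
      ext <;> simp [ν]) fun e hνe hσe => ?_
  obtain ⟨p, rfl⟩ := exists_prodMap_eq_of_commute h2 hσe
  have hcomm (z) := LinearMap.congr_fun hνe.eq z
  rw [← End.isUnit_iff]
  refine (hab p ?_ ?_).imp (fun h => h.map (LinearMap.prodMapAlgHom k W U))
    fun h => h.map (LinearMap.prodMapAlgHom k W U)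
  · ext w
    simpa [ν] using congrArg Prod.snd (hcomm (w, 0))
  · ext u
    simpa [ν] using congrArg Prod.fst (hcomm (0, u)).symm

theorem finrank_ker_comp_add_le_one [FiniteDimensional k U] (h2 : (2 : k) ≠ 0)
    (hab : IsFittingPair a b) (ha : Function.Bijective a) (c : k)
    (hnil : IsNilpotent ((a ∘ₗ b : End k U) + algebraMap k _ c)) :
    finrank k (LinearMap.ker ((a ∘ₗ b : End k U) + algebraMap k _ c)) ≤ 1 := by
  let A := LinearEquiv.ofBijective a ha
  refine finrank_ker_le_one_of_isNilpotent h2 hnil (σ := 1) (mul_one 1) (mul_one 1)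
    (by rw [one_smul]; exact SemiconjBy.one_left _) fun e he _ => ?_
  have hcomm : Commute (a ∘ₗ b : End k U) e := by
    simpa using he.sub_left ((Algebra.commutes c e : Commute _ e))
  have hconj : a ∘ₗ (A.symm.toLinearMap ∘ₗ e ∘ₗ a) = e ∘ₗ a := by
    ext w
    exact A.apply_symm_apply _
  rw [← End.isUnit_iff]
  refine (hab (A.symm.toLinearMap ∘ₗ e ∘ₗ a, e) hconj ?_).imp
    (fun h => h.map (RingHom.snd (End k W) (End k U)))
    fun h => h.map (RingHom.snd (End k W) (End k U))
  rw [← LinearMap.cancel_left ha.1, ← LinearMap.comp_assoc, hconj]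
  exact hcomm.eq.symm

end IsFittingPair

end FittingPair

section Parity

theorem isUnit_algebraMap_add_of_isNilpotent {k A : Type*} [Field k] [Ring A] [Algebra k A] {x : A}
    (hx : IsNilpotent x) {c : k} (hc : c ≠ 0) : IsUnit (algebraMap k A c + x) :=
  hx.isUnit_add_left_of_commute ((IsUnit.mk0 c hc).map _) (Algebra.commutes c x).symm

variable {k V : Type*} [Field k] [AddCommGroup V] [Module k V]

/-- The form `B (g x) y - B x (g y)`, used for an isometry `g` of a symmetric form `B`: it is then
alternating, and nondegenerate when `B` and `g ^ 2 - 1` are. -/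
def isometryForm (B : LinearMap.BilinForm k V) (g : End k V) : LinearMap.BilinForm k V :=
  B.compl₁₂ g 1 - B.compl₁₂ 1 g

variable {B : LinearMap.BilinForm k V} {g : End k V}

theorem isometryForm_isAlt (hB : B.IsSymm) : (isometryForm B g).IsAlt := fun _ =>
  sub_eq_zero.2 (hB.eq _ _)

theorem isometryForm_comp (hg : ∀ x y, B (g x) (g y) = B x y) :
    isometryForm B g ∘ₗ g = B ∘ₗ (g * g - 1) := by
  ext x y
  simp [isometryForm, hg]

variable [FiniteDimensional k V]

theorem even_finrank_of_nondegenerate_skew (h2 : (2 : k) ≠ 0) {ω : LinearMap.BilinForm k V}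
    (hnd : ω.Nondegenerate) (hω : ∀ x y, ω x y = -ω y x) : Even (finrank k V) := by
  let A := LinearMap.BilinForm.toMatrix (finBasis k V) ω
  have hdet : A.det ≠ 0 := (LinearMap.BilinForm.nondegenerate_iff_det_ne_zero _).1 hnd
  have hskew : A.transpose = -A := by
    ext i j
    simpa [A, LinearMap.BilinForm.toMatrix_apply] using hω _ _
  by_contra hodd
  refine hdet (eq_zero_of_eq_neg h2 ?_)
  calc A.det = A.transpose.det := A.det_transpose.symm
    _ = -A.det := by
      rw [hskew, Matrix.det_neg, Fintype.card_fin, (Nat.not_even_iff_odd.1 hodd).neg_one_pow,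
        neg_one_mul]

theorem even_finrank_range_of_skew (h2 : (2 : k) ≠ 0) {ω : LinearMap.BilinForm k V}
    (hω : ∀ x y, ω x y = -ω y x) : Even (finrank k (LinearMap.range ω)) := by
  obtain ⟨Q, hQ⟩ := Submodule.exists_isCompl (LinearMap.ker ω)
  have hrank := ω.finrank_range_add_finrank_ker
  rw [← finrank_add_eq_of_isCompl hQ, add_comm, Nat.add_left_cancel_iff] at hrank
  rw [hrank]
  refine even_finrank_of_nondegenerate_skew h2 (ω := ω.restrict Q) (.ofSeparatingLeft ?_)
    fun x y => hω x y
  intro x hx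
  refine Subtype.ext (disjoint_def.1 hQ.disjoint _ (LinearMap.mem_ker.2 ?_) x.2)
  ext v
  obtain ⟨r, hr, y, hy, rfl⟩ := mem_sup.1 (hQ.sup_eq_top ▸ mem_top : v ∈ LinearMap.ker ω ⊔ Q)
  rw [map_add, hω x r, LinearMap.mem_ker.1 hr, LinearMap.zero_apply, neg_zero, zero_add]
  exact hx ⟨y, hy⟩

theorem bijective_of_isometry (hnd : B.Nondegenerate) (hg : ∀ x y, B (g x) (g y) = B x y) :
    Function.Bijective g := by
  have hinj : Function.Injective g := (injective_iff_map_eq_zero g).2 fun x hx =>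
    hnd.1 x fun y => by rw [← hg, hx, map_zero, LinearMap.zero_apply]
  exact ⟨hinj, LinearMap.injective_iff_surjective.1 hinj⟩

theorem even_finrank_range_of_isometry (h2 : (2 : k) ≠ 0) (hB : B.IsSymm) (hnd : B.Nondegenerate)
    (hg : ∀ x y, B (g x) (g y) = B x y) : Even (finrank k (LinearMap.range (g * g - 1))) := by
  have hrange : LinearMap.range (isometryForm B g) = (LinearMap.range (g * g - 1)).map B := by
    rw [← LinearMap.range_comp, ← isometryForm_comp hg, LinearMap.range_comp_of_range_eq_top]
    exact LinearMap.range_eq_top.2 (bijective_of_isometry hnd hg).2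
  have heven := even_finrank_range_of_skew h2 (ω := isometryForm B g) fun x y =>
    ((isometryForm_isAlt hB).neg_eq y x).symm
  rwa [hrange, ← (equivMapOfInjective B (LinearMap.ker_eq_bot.1 hnd.ker_eq_bot) _).finrank_eq]
    at heven

theorem subsingleton_of_isometry (h2 : (2 : k) ≠ 0) (hB : B.IsSymm) (hnd : B.Nondegenerate)
    (hg : ∀ x y, B (g x) (g y) = B x y) (heven : Even (finrank k V)) {c : k} (hc : c * c = 1)
    (hnil : IsNilpotent (g + algebraMap k _ c))
    (hker : finrank k (LinearMap.ker (g + algebraMap k _ c)) ≤ 1) : Subsingleton V := by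
  have hunit : IsUnit (g - algebraMap k _ c) := by
    have heq : g - algebraMap k _ c = algebraMap k _ (-2 * c) + (g + algebraMap k _ c) := by
      rw [map_mul, map_neg, map_ofNat]
      noncomm_ring
    rw [heq]
    exact isUnit_algebraMap_add_of_isNilpotent hnil
      (mul_ne_zero (neg_ne_zero.2 h2) (left_ne_zero_of_mul_eq_one hc))
  have hfactor : g * g - 1 = (g - algebraMap k _ c) * (g + algebraMap k _ c) := by
    have hcc : algebraMap k (End k V) c * algebraMap k _ c = 1 := by rw [← map_mul, hc, map_one]
    rw [sub_mul, mul_add, mul_add, hcc, ← Algebra.commutes c g]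
    abel
  have hker_eq : LinearMap.ker (g * g - 1) = LinearMap.ker (g + algebraMap k _ c) := by
    rw [hfactor, End.mul_eq_comp, LinearMap.ker_comp_of_ker_eq_bot]
    exact LinearMap.ker_eq_bot.2 ((End.isUnit_iff _).1 hunit).1
  have hker_even : Even (finrank k (LinearMap.ker (g + algebraMap k _ c))) := by
    rw [← (g * g - 1).finrank_range_add_finrank_ker, hker_eq, Nat.even_add] at heven
    exact heven.1 (even_finrank_range_of_isometry h2 hB hnd hg)
  have hker_bot : LinearMap.ker (g + algebraMap k _ c) = ⊥ := by
    rw [← finrank_eq_zero]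
    obtain ⟨m, hm⟩ := hker_even
    omega
  obtain ⟨n, hn⟩ := hnil
  refine ⟨fun x y => LinearMap.ker_eq_bot.1 hker_bot |>.iterate n ?_⟩
  rw [← End.coe_pow, hn]
  rfl

end Parity

section Symmetric

variable {k V W U : Type*} [Field k] [AddCommGroup V] [Module k V] [AddCommGroup W] [Module k W]
  [AddCommGroup U] [Module k U] {I C : ZMod 3 → Submodule k V} {a : W →ₗ[k] U} {b : U →ₗ[k] W}
  {β : LinearMap.BilinForm k W} {s : LinearMap.BilinForm k U} {B : LinearMap.BilinForm k V}
  {Φ : (W × W × U) ≃ₗ[k] V}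

/-- The relations satisfied by the blocks `β`, `s` of a symmetric self-duality of the sextuple with
normal form `a, b`. -/
structure IsFormPair (a : W →ₗ[k] U) (b : U →ₗ[k] W) (β : LinearMap.BilinForm k W)
    (s : LinearMap.BilinForm k U) : Prop where
  isSymm : s.IsSymm
  nondegenerate : s.Nondegenerate
  separatingLeft : β.SeparatingLeft
  apply_comp : ∀ w u, s (a w) u = β (b u) w
  add_add_eq_zero : ∀ w x, β w x + β x w + s (a w) (a x) = 0

theorem IsNormalForm.exists_isFormPair (hN : IsNormalForm a b Φ I C) (hIC : ∀ j, I j ≤ C j)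
    (hB : IsSelfDuality B I C) (hsymm : B.IsSymm) :
    ∃ (β : LinearMap.BilinForm k W) (s : LinearMap.BilinForm k U), IsFormPair a b β s ∧
      ∀ x y u x' y' u', B (Φ (x, y, u)) (Φ (x', y', u')) = β x y' + β x' y + s u u' := by
  let ι₁ : W →ₗ[k] V := Φ.toLinearMap ∘ₗ LinearMap.inl k W (W × U)
  let ι₂ : W →ₗ[k] V := Φ.toLinearMap ∘ₗ LinearMap.inr k W (W × U) ∘ₗ LinearMap.inl k W U
  let ι₃ : U →ₗ[k] V := Φ.toLinearMap ∘ₗ LinearMap.inr k W (W × U) ∘ₗ LinearMap.inr k W U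
  have hΦ (x y u) : Φ (x, y, u) = ι₁ x + ι₂ y + ι₃ u := by
    simp [ι₁, ι₂, ι₃, ← map_add]
  have hI₁ (x) : ι₁ x ∈ I 1 := hN.mem_I_one_iff.2 ⟨rfl, rfl⟩
  have hI₂ (y) : ι₂ y ∈ I 2 := hN.mem_I_two_iff.2 ⟨rfl, rfl⟩
  have hC₁ (u) : ι₃ u ∈ C 1 := hN.mem_C_one_iff.2 rfl
  have hC₂ (u) : ι₃ u ∈ C 2 := hN.mem_C_two_iff.2 rfl
  have formula (x y u x' y' u') : B (Φ (x, y, u)) (Φ (x', y', u')) =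
      B (ι₁ x) (ι₂ y') + B (ι₁ x') (ι₂ y) + B (ι₃ u) (ι₃ u') := by
    simp only [hΦ, map_add, LinearMap.add_apply, hB.apply_I_C (hI₁ _) (hIC 1 (hI₁ _)),
      hB.apply_I_C (hI₂ _) (hIC 2 (hI₂ _)), hB.apply_I_C (hI₁ _) (hC₁ _),
      hB.apply_I_C (hI₂ _) (hC₂ _), hB.apply_C_I (hC₁ _) (hI₁ _), hB.apply_C_I (hC₂ _) (hI₂ _),
      hsymm.eq (ι₁ x') (ι₂ y)]
    ring
  have hs : LinearMap.BilinForm.IsSymm (B.compl₁₂ ι₃ ι₃) := ⟨fun _ _ => hsymm.eq _ _⟩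
  refine ⟨B.compl₁₂ ι₁ ι₂, B.compl₁₂ ι₃ ι₃, ⟨hs, hs.isRefl.nondegenerate_iff_separatingLeft.2 ?_,
    fun w hw => ?_, fun w u => ?_, fun w x => ?_⟩, formula⟩
  · intro u hu
    have h0 := hB.nondegenerate.1 (Φ (0, 0, u)) fun z => by
      obtain ⟨⟨x', y', u'⟩, rfl⟩ := Φ.surjective z
      simpa [formula] using hu u'
    simpa using h0
  · have h0 := hB.nondegenerate.1 (Φ (w, 0, 0)) fun z => by
      obtain ⟨⟨x', y', u'⟩, rfl⟩ := Φ.surjective z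
      simpa [formula] using hw y'
    simpa using h0
  · have horth : B (Φ (w, w, a w)) (Φ (-b u, 0, u)) = 0 :=
      hB.apply_I_C (hN.mem_I_zero_iff.2 ⟨rfl, rfl⟩) (hN.mem_C_zero_iff.2 (by simp))
    rw [formula] at horth
    simp only [map_neg, map_zero, LinearMap.neg_apply, zero_add] at horth
    simp only [LinearMap.compl₁₂_apply]
    linear_combination horth
  · have horth : B (Φ (w, w, a w)) (Φ (x, x, a x)) = 0 :=
      hB.apply_I_C (hN.mem_I_zero_iff.2 ⟨rfl, rfl⟩) (hIC 0 (hN.mem_I_zero_iff.2 ⟨rfl, rfl⟩))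
    rwa [formula] at horth

namespace IsFormPair

variable (hs : IsFormPair a b β s)
include hs

theorem isometry (u v : U) :
    s ((1 + a ∘ₗ b : End k U) u) ((1 + a ∘ₗ b : End k U) v) = s u v := by
  have hskew := hs.add_add_eq_zero (b u) (b v)
  have huv := hs.apply_comp (b u) v
  have hvu := hs.apply_comp (b v) u
  have hsymm := hs.isSymm.eq u (a (b v))
  simp only [LinearMap.add_apply, End.one_apply, LinearMap.comp_apply, map_add]
  linear_combination hskew + huv + hvu + hsymm

theorem isometry_diagonalEnd
    (formula : ∀ x y u x' y' u', B (Φ (x, y, u)) (Φ (x', y', u')) = β x y' + β x' y + s u u')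
    (v w : V) : B (diagonalEnd Φ (1 + b ∘ₗ a, 1 + a ∘ₗ b) v)
      (diagonalEnd Φ (1 + b ∘ₗ a, 1 + a ∘ₗ b) w) = B v w := by
  have cross (x y : W) : β ((1 + b ∘ₗ a : End k W) x) ((1 + b ∘ₗ a : End k W) y) = β x y := by
    have hskew := hs.add_add_eq_zero (b (a y)) x
    have hx := hs.apply_comp y (a x)
    have hxy := hs.apply_comp (b (a y)) (a x)
    have hsymm := hs.isSymm.eq (a y) (a x)
    have hy := hs.apply_comp x (a y)
    simp only [LinearMap.add_apply, End.one_apply, LinearMap.comp_apply, map_add]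
    linear_combination hskew - hx - hxy + hsymm + hy
  obtain ⟨⟨x, y, u⟩, rfl⟩ := Φ.surjective v
  obtain ⟨⟨x', y', u'⟩, rfl⟩ := Φ.surjective w
  rw [diagonalEnd_apply, diagonalEnd_apply, formula, formula, cross, cross, hs.isometry]

theorem subsingleton_of_isNilpotent [FiniteDimensional k W] [FiniteDimensional k U]
    (h2 : (2 : k) ≠ 0) (hab : IsFittingPair a b) (heven : Even (finrank k U))
    (hnil : IsNilpotent ((b ∘ₗ a, a ∘ₗ b) : End k W × End k U)) :
    Subsingleton W ∧ Subsingleton U := by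
  have hker := hab.finrank_ker_add_finrank_ker_le_one h2 hnil
  have heq : (1 + a ∘ₗ b : End k U) + algebraMap k _ (-1) = a ∘ₗ b := by simp
  have hU : Subsingleton U := by
    refine subsingleton_of_isometry h2 hs.isSymm hs.nondegenerate hs.isometry heven (c := -1)
      (by norm_num) ?_ ?_ <;> rw [heq]
    exacts [hnil.map (RingHom.snd (End k W) (End k U)), (finrank_ker_comp_le a b).trans hker]
  have hskew (w x : W) : β w x = -β x w := eq_neg_of_add_eq_zero_left <| by
    simpa [Subsingleton.elim (a w) 0] using hs.add_add_eq_zero w x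
  obtain ⟨m, hm⟩ :=
    even_finrank_of_nondegenerate_skew h2 (.ofSeparatingLeft hs.separatingLeft) hskew
  have hker_a : LinearMap.ker a = ⊤ := LinearMap.ker_eq_top.2 (Subsingleton.elim _ _)
  rw [hker_a, finrank_top] at hker
  have hW : Subsingleton W := (finrank_zero_iff (R := k)).1 (by omega)
  exact ⟨hW, hU⟩

theorem subsingleton_of_isNilpotent_add_two [FiniteDimensional k W] [FiniteDimensional k U]
    (h2 : (2 : k) ≠ 0) (hab : IsFittingPair a b) (heven : Even (finrank k U))
    (hnil : IsNilpotent (((b ∘ₗ a, a ∘ₗ b) : End k W × End k U) + algebraMap k _ 2)) :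
    Subsingleton W ∧ Subsingleton U := by
  have hnil_snd : IsNilpotent ((a ∘ₗ b : End k U) + algebraMap k _ 2) :=
    hnil.map (RingHom.snd (End k W) (End k U))
  have hunit := isUnit_algebraMap_add_of_isNilpotent hnil (neg_ne_zero.2 h2)
  rw [map_neg, neg_add_cancel_comm_assoc, Prod.isUnit_iff, End.isUnit_iff, End.isUnit_iff] at hunit
  have ha : Function.Bijective a := ⟨.of_comp hunit.1.1, .of_comp hunit.2.2⟩
  have heq : (1 + a ∘ₗ b : End k U) + algebraMap k _ 1 = (a ∘ₗ b : End k U) + algebraMap k _ 2 := by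
    rw [map_one, map_ofNat, ← one_add_one_eq_two]
    abel
  have hU : Subsingleton U := by
    refine subsingleton_of_isometry h2 hs.isSymm hs.nondegenerate hs.isometry heven (c := 1)
      (one_mul 1) ?_ ?_ <;> rw [heq]
    exacts [hnil_snd, hab.finrank_ker_comp_add_le_one h2 ha 2 hnil_snd]
  exact ⟨ha.1.subsingleton, hU⟩

end IsFormPair

section Transfer

variable [FiniteDimensional k V] {f : End k V}

theorem apply_mem_iff_of_injective (hf : Function.Injective f) {X : Submodule k V}
    (hX : ∀ x ∈ X, f x ∈ X) {x : V} : f x ∈ X ↔ x ∈ X := by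
  refine ⟨fun hx => ?_, hX x⟩
  obtain ⟨y, hy⟩ := LinearMap.injective_iff_surjective.1
    (fun _ _ h => Subtype.ext (hf (congrArg Subtype.val h)) : Function.Injective (f.restrict hX))
    ⟨f x, hx⟩
  rw [← hf (congrArg Subtype.val hy)]
  exact y.2

theorem isSelfDuality_comp_iff (hf : f ∈ sextupleEnd I C) (hbij : Function.Bijective f) :
    IsSelfDuality (B ∘ₗ f) I C ↔ IsSelfDuality B I C := by
  obtain ⟨hI, hC⟩ := mem_sextupleEnd.1 hf
  have mem_I (j x) := apply_mem_iff_of_injective hbij.1 (hI j) (x := x)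
  have mem_C (j x) := apply_mem_iff_of_injective hbij.1 (hC j) (x := x)
  constructor <;> intro h
  · refine ⟨.ofSeparatingLeft fun x hx => ?_, fun {j x} => ?_, fun {j x} => ?_⟩ <;>
      obtain ⟨x, rfl⟩ := hbij.2 x
    · rw [h.nondegenerate.1 x hx, map_zero]
    · rw [mem_I, h.mem_I_iff, LinearMap.comp_apply]
    · rw [mem_C, h.mem_C_iff, LinearMap.comp_apply]
  · refine ⟨.ofSeparatingLeft fun x hx => hbij.1 ?_, fun {j x} => ?_, fun {j x} => ?_⟩
    · rw [map_zero, h.nondegenerate.1 (f x) hx]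
    · rw [← mem_I, h.mem_I_iff, LinearMap.comp_apply]
    · rw [← mem_C, h.mem_C_iff, LinearMap.comp_apply]

end Transfer

variable [FiniteDimensional k V]

theorem IsNormalForm.exists_isAlt (hN : IsNormalForm a b Φ I C) (h : IndecSextuple I C)
    (hB : IsSelfDuality B I C) (hsymm : B.IsSymm) (h2 : (2 : k) ≠ 0) (heven : Even (finrank k V)) :
    ∃ ω : LinearMap.BilinForm k V, IsSelfDuality ω I C ∧ ω.IsAlt := by
  have : FiniteDimensional k (W × W × U) := .of_injective Φ.toLinearMap Φ.injective
  have : FiniteDimensional k W := .of_injective (.inl k W (W × U)) LinearMap.inl_injective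
  have : FiniteDimensional k U :=
    .of_injective (.inr k W (W × U) ∘ₗ .inr k W U)
      (LinearMap.inr_injective.comp LinearMap.inr_injective)
  have heven_U : Even (finrank k U) := by
    rw [← Φ.finrank_eq, finrank_prod, finrank_prod, ← add_assoc] at heven
    exact (Nat.even_add.1 heven).1 ⟨_, rfl⟩
  have hV : ¬ (Subsingleton W ∧ Subsingleton U) := by
    rintro ⟨_, _⟩
    have := h.nontrivial
    exact not_subsingleton V Φ.symm.injective.subsingleton
  obtain ⟨β, s, hs, formula⟩ := hN.exists_isFormPair h.le hB hsymm
  have hab := hN.isFittingPair h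
  let p : End k W × End k U := (b ∘ₗ a, a ∘ₗ b)
  have hp : IsUnit p := (hab p rfl rfl).resolve_left fun hnil =>
    hV (hs.subsingleton_of_isNilpotent h2 hab heven_U hnil)
  have hp_two : IsUnit (p + algebraMap k _ 2) := (hab _ (by ext; simp [p])
    (by ext; simp [p])).resolve_left fun hnil =>
    hV (hs.subsingleton_of_isNilpotent_add_two h2 hab heven_U hnil)
  let g := diagonalEnd Φ (1 + b ∘ₗ a, 1 + a ∘ₗ b)
  have hg : g ∈ sextupleEnd I C := hN.diagonalEnd_mem (by ext; simp) (by ext; simp)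
  have hg_isom : ∀ x y, B (g x) (g y) = B x y := hs.isometry_diagonalEnd formula
  have hfactor : g * g - 1 = diagonalEnd Φ ((p + algebraMap k _ 2) * p) := by
    have hg_eq : g = diagonalEnd Φ (1 + p) := rfl
    rw [hg_eq, ← map_mul, ← map_one (diagonalEnd Φ), ← map_sub, map_ofNat]
    congr 1
    noncomm_ring
  refine ⟨isometryForm B g, ?_, isometryForm_isAlt hsymm⟩
  rw [← isSelfDuality_comp_iff hg (bijective_of_isometry hB.nondegenerate hg_isom),
    isometryForm_comp hg_isom, isSelfDuality_comp_iff (sub_mem (mul_mem hg hg) (one_mem _))]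
  · exact hB
  · rw [hfactor, bijective_diagonalEnd_iff]
    exact hp_two.mul hp

theorem IndecSextuple.exists_isAlt_of_isSymm (h : IndecSextuple I C) (hB : IsSelfDuality B I C)
    (hsymm : B.IsSymm) (h2 : (2 : k) ≠ 0) (heven : Even (finrank k V)) :
    ∃ ω : LinearMap.BilinForm k V, IsSelfDuality ω I C ∧ ω.IsAlt := by
  obtain ⟨a, b, Φ, hN⟩ := exists_isNormalForm h.le fun i j => h.isCompl_I_C hB
  exact hN.exists_isAlt h hB hsymm h2 heven

end Symmetric

section SelfDual

variable {k V : Type*} [Field k] [AddCommGroup V] [Module k V] {P Q : Submodule k V}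

theorem map_eq_dualAnnihilator_iff {g : V ≃ₗ[k] Dual k V} :
    P.map g.toLinearMap = Q.dualAnnihilator ↔ ∀ x, x ∈ P ↔ ∀ y ∈ Q, g x y = 0 := by
  rw [SetLike.ext_iff, g.surjective.forall]
  exact forall_congr' fun x => iff_congr (g.injective.mem_set_image (s := (P : Set V)))
    (mem_dualAnnihilator _)

variable [FiniteDimensional k V] {ω : LinearMap.BilinForm k V}

theorem forall_apply_eq_zero_iff_of_isAlt (hnd : ω.Nondegenerate) (hω : ω.IsAlt)
    (h : ∀ v, (∀ w ∈ P, ω v w = 0) ↔ v ∈ Q) {x : V} : x ∈ P ↔ ∀ y ∈ Q, ω x y = 0 := by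
  have hQ : Q = ω.orthogonal P := by
    ext v
    rw [← h, LinearMap.BilinForm.mem_orthogonal_iff]
    exact forall₂_congr fun w _ => hω.eq_iff
  have hP : ω.orthogonal Q = P := by
    rw [hQ, LinearMap.BilinForm.orthogonal_orthogonal hnd hω.isRefl]
  rw [← hP, LinearMap.BilinForm.mem_orthogonal_iff]
  exact forall₂_congr fun w _ => hω.eq_iff

variable {I C : ZMod 3 → Submodule k V} {B : LinearMap.BilinForm k V}

theorem IsSelfDuality.exists_asymmetry (hB : IsSelfDuality B I C) :
    ∃ τ ∈ sextupleEnd I C, ∀ x y, B (τ x) y = B y x := by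
  let e := B.toDual hB.nondegenerate
  let τ : End k V := e.symm.toLinearMap ∘ₗ B.flip
  have hτ (x y) : B (τ x) y = B y x :=
    B.apply_toDual_symm_apply (hB := hB.nondegenerate) (B.flip x) y
  refine ⟨τ, mem_sextupleEnd.2 ⟨fun j x hx => hB.mem_I_iff.2 fun y hy => ?_,
    fun j x hx => hB.mem_C_iff.2 fun y hy => ?_⟩, hτ⟩
  · rw [hτ, hB.apply_C_I hy hx]
  · rw [hτ, hB.apply_I_C hy hx]

theorem IndecSextuple.exists_isAlt (h : IndecSextuple I C) (hB : IsSelfDuality B I C)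
    (h2 : (2 : k) ≠ 0) (heven : Even (finrank k V)) :
    ∃ ω : LinearMap.BilinForm k V, IsSelfDuality ω I C ∧ ω.IsAlt := by
  obtain ⟨τ, hτ_mem, hτ⟩ := hB.exists_asymmetry
  have hsub := sub_mem (one_mem (sextupleEnd I C)) hτ_mem
  rcases h.isNilpotent_or_bijective hsub with hnil | hbij
  · have hadd : IsUnit (1 + τ) := by
      have heq : 1 + τ = algebraMap k (End k V) 2 + -(1 - τ) := by
        rw [map_ofNat, ← one_add_one_eq_two]
        abel
      exact heq ▸ isUnit_algebraMap_add_of_isNilpotent hnil.neg h2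
    have hB' := (isSelfDuality_comp_iff (add_mem (one_mem (sextupleEnd I C)) hτ_mem)
      ((End.isUnit_iff _).1 hadd)).2 hB
    exact h.exists_isAlt_of_isSymm hB' ⟨fun x y => by simp [hτ, add_comm]⟩ h2 heven
  · exact ⟨B ∘ₗ (1 - τ), (isSelfDuality_comp_iff hsub hbij).2 hB, fun x => by simp [hτ]⟩

theorem IndecSextuple.exists_isAlt_iff (h : IndecSextuple I C) (h2 : (2 : k) ≠ 0) :
    (∃ ω : LinearMap.BilinForm k V, ω.Nondegenerate ∧ ω.IsAlt ∧
      ∀ j v, (∀ w ∈ I j, ω v w = 0) ↔ v ∈ C j) ↔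
    (∃ g : V ≃ₗ[k] Dual k V, ∀ j, (I j).map g.toLinearMap = (C j).dualAnnihilator ∧
      (C j).map g.toLinearMap = (I j).dualAnnihilator) ∧ Even (finrank k V) := by
  simp only [map_eq_dualAnnihilator_iff]
  constructor
  · rintro ⟨ω, hnd, hω, hC⟩
    exact ⟨⟨ω.toDual hnd, fun j => ⟨fun x => forall_apply_eq_zero_iff_of_isAlt hnd hω (hC j),
      fun x => (hC j x).symm⟩⟩,
      even_finrank_of_nondegenerate_skew h2 hnd fun x y => (hω.neg_eq y x).symm⟩
  · rintro ⟨⟨g, hg⟩, heven⟩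
    have hB : IsSelfDuality g.toLinearMap I C :=
      ⟨.ofSeparatingLeft fun x hx => g.map_eq_zero_iff.1 (LinearMap.ext hx), (hg _).1 _,
        (hg _).2 _⟩
    obtain ⟨ω, hω, halt⟩ := h.exists_isAlt hB h2 heven
    exact ⟨ω, hω.nondegenerate, halt, fun j v => hω.mem_C_iff.symm⟩

end SelfDual

theorem indecomposable_sextuple_symplectic_iff_selfdual_even_general
    {k V : Type*} [Field k] (h2 : (2 : k) ≠ 0)
    [AddCommGroup V] [Module k V] [FiniteDimensional k V] [Nontrivial V]
    (I1 C1 I2 C2 I3 C3 : Submodule k V)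
    (h1 : I1 ≤ C1) (h2' : I2 ≤ C2) (h3 : I3 ≤ C3)
    (hindec : ∀ U' U'' : Submodule k V, IsCompl U' U'' →
      (∀ X ∈ ([I1, C1, I2, C2, I3, C3] : List (Submodule k V)),
        X = (X ⊓ U') ⊔ (X ⊓ U'')) →
      U' = ⊥ ∨ U'' = ⊥) :
    (∃ ω : LinearMap.BilinForm k V, LinearMap.BilinForm.Nondegenerate ω ∧
        LinearMap.IsAlt ω ∧
        (∀ v : V, (∀ w ∈ I1, ω v w = 0) ↔ v ∈ C1) ∧
        (∀ v : V, (∀ w ∈ I2, ω v w = 0) ↔ v ∈ C2) ∧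
        (∀ v : V, (∀ w ∈ I3, ω v w = 0) ↔ v ∈ C3))
    ↔ ((∃ g : V ≃ₗ[k] Module.Dual k V,
          I1.map g.toLinearMap = C1.dualAnnihilator ∧
          C1.map g.toLinearMap = I1.dualAnnihilator ∧
          I2.map g.toLinearMap = C2.dualAnnihilator ∧
          C2.map g.toLinearMap = I2.dualAnnihilator ∧
          I3.map g.toLinearMap = C3.dualAnnihilator ∧
          C3.map g.toLinearMap = I3.dualAnnihilator) ∧
        Even (Module.finrank k V)) := by
  have hsext : IndecSextuple (k := k) ![I1, I2, I3] ![C1, C2, C3] :=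
    { nontrivial := inferInstance
      le := forall_zmod_three.2 ⟨h1, h2', h3⟩
      eq_bot_or_eq_bot := fun A B hAB hX => hindec A B hAB fun X hmem =>
        le_antisymm (by
          simp only [Sum.forall, forall_zmod_three] at hX
          obtain ⟨⟨hI1, hI2, hI3⟩, hC1, hC2, hC3⟩ := hX
          simp only [List.mem_cons, List.not_mem_nil, or_false] at hmem
          rcases hmem with rfl | rfl | rfl | rfl | rfl | rfl <;> assumption)
          (sup_le inf_le_left inf_le_left) }
  have key := hsext.exists_isAlt_iff h2
  simp only [forall_zmod_three, and_assoc] at key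
  exact key

/-- Let `k` be a perfect field of characteristic `≠ 2` and
`(I₁, C₁, I₂, C₂, I₃, C₃)` an indecomposable sextuple in a finite-dimensional
`k`-vector space `V`.  The following are equivalent: (1) there is a nondegenerate
alternating bilinear form `ω` on `V` whose orthogonal of `Iᵢ` equals `Cᵢ` for each `i`
(i.e. the sextuple underlies an isotropic triple); (2) the sextuple is self-dual and
`dim V` is even. -/
theorem indecomposable_sextuple_symplectic_iff_selfdual_even
    {k V : Type*} [Field k] [PerfectField k] (h2 : (2 : k) ≠ 0)
    [AddCommGroup V] [Module k V] [FiniteDimensional k V] [Nontrivial V]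
    (I1 C1 I2 C2 I3 C3 : Submodule k V)
    (h1 : I1 ≤ C1) (h2' : I2 ≤ C2) (h3 : I3 ≤ C3)
    (hindec : ∀ U' U'' : Submodule k V, IsCompl U' U'' →
      (∀ X ∈ ([I1, C1, I2, C2, I3, C3] : List (Submodule k V)),
        X = (X ⊓ U') ⊔ (X ⊓ U'')) →
      U' = ⊥ ∨ U'' = ⊥) :
    (∃ ω : LinearMap.BilinForm k V, LinearMap.BilinForm.Nondegenerate ω ∧
        LinearMap.IsAlt ω ∧
        (∀ v : V, (∀ w ∈ I1, ω v w = 0) ↔ v ∈ C1) ∧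
        (∀ v : V, (∀ w ∈ I2, ω v w = 0) ↔ v ∈ C2) ∧
        (∀ v : V, (∀ w ∈ I3, ω v w = 0) ↔ v ∈ C3))
    ↔ ((∃ g : V ≃ₗ[k] Module.Dual k V,
          I1.map g.toLinearMap = C1.dualAnnihilator ∧
          C1.map g.toLinearMap = I1.dualAnnihilator ∧
          I2.map g.toLinearMap = C2.dualAnnihilator ∧
          C2.map g.toLinearMap = I2.dualAnnihilator ∧
          I3.map g.toLinearMap = C3.dualAnnihilator ∧
          C3.map g.toLinearMap = I3.dualAnnihilator) ∧
        Even (Module.finrank k V)) := by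
  exact indecomposable_sextuple_symplectic_iff_selfdual_even_general h2 I1 C1 I2 C2 I3 C3 h1 h2' h3
    hindec
end
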